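/- arXiv:0903.0473 — 9 statements merged into one kernel-verified Lean document; each statement's English description precedes it below -/
import Mathlib

section
/- Let s1, s2, s3, s4 be nonnegative integers. The double series ζ_so(s1,s2,s3,s4) = ∑_{m,n=1}^∞ 1/(m^{s1} n^{s2} (m+n)^{s3} (m+2n)^{s4}) converges if and only if s1+s3+s4 > 1, s2+s3+s4 > 1, and s1+s2+s3+s4 > 2. -/
/-!
Both `m + n` and `m + 2n` are of the order of `max m n`, so the series converges together with
`∑ 1 / (m ^ a * n ^ b * max m n ^ c)`, where `c = s₃ + s₄`. Where `m ≤ n` the summand is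
`1 / (m ^ a * n ^ (b + c))`, and as long as `a + b + c > 2` and `b + c > 1` a power of `n / m ≥ 1`
can be moved between the two factors to make both exponents exceed `1`; the region `n ≤ m` is
symmetric. Conversely, the row `n = 1`, the column `m = 1` and the sector `m < n ≤ 2m`, which has
`m` points over each `m`, force the three inequalities.
-/

open Asymptotics Filter

section

variable {α : Type*} {l : Filter α} {f g : α → ℝ}

lemma isTheta_of_le_of_le_mul (C : ℝ) (hg : ∀ x, 0 ≤ g x) (hgf : ∀ x, g x ≤ f x)
    (hfg : ∀ x, f x ≤ C * g x) : f =Θ[l] g := by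
  constructor
  · refine .of_bound C (.of_forall fun x => ?_)
    rw [Real.norm_of_nonneg ((hg x).trans (hgf x)), Real.norm_of_nonneg (hg x)]
    exact hfg x
  · refine .of_bound' (.of_forall fun x => ?_)
    rw [Real.norm_of_nonneg ((hg x).trans (hgf x)), Real.norm_of_nonneg (hg x)]
    exact hgf x

lemma isTheta_add_mul_max {t : ℝ} (ht : 1 ≤ t) (hf : ∀ x, 0 ≤ f x) (hg : ∀ x, 0 ≤ g x) :
    (fun x => f x + t * g x) =Θ[l] fun x => max (f x) (g x) := by
  refine isTheta_of_le_of_le_mul (1 + t) (fun x => le_max_of_le_left (hf x)) (fun x => ?_)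
    fun x => ?_
  · have : g x ≤ t * g x := le_mul_of_one_le_left (hg x) ht
    exact max_le (by linarith [hg x]) (by linarith [hf x])
  · have : t * g x ≤ t * max (f x) (g x) := by gcongr; exact le_max_right _ _
    linarith [le_max_left (f x) (g x)]

end

lemma summable_pnat_one_div_rpow_iff {s : ℝ} :
    Summable (fun n : ℕ+ => 1 / (n : ℝ) ^ s) ↔ 1 < s :=
  (summable_pnat_iff_summable_nat (f := fun n : ℕ => 1 / (n : ℝ) ^ s)).trans
    Real.summable_one_div_nat_rpow

lemma summable_sigma_fst_iff {ι : Type*} {β : ι → Type*} [∀ i, Fintype (β i)] {g : ι → ℝ}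
    (hg : ∀ i, 0 ≤ g i) :
    Summable (fun p : Σ i, β i => g p.1) ↔ Summable fun i => Fintype.card (β i) * g i := by
  rw [summable_sigma_of_nonneg fun p => hg p.1]
  simp [Summable.of_finite]

/-- The summand `1 / (m ^ a * n ^ b * max m n ^ c)` at `p = (m, n)`, a model for the summand of
`ζ_so(s₁, s₂, s₃, s₄)` with `a = s₁`, `b = s₂` and `c = s₃ + s₄`. -/
noncomputable def maxSummand (a b c : ℝ) (p : ℕ+ × ℕ+) : ℝ :=
  1 / ((p.1 : ℝ) ^ a * (p.2 : ℝ) ^ b * max (p.1 : ℝ) p.2 ^ c)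

namespace maxSummand

variable {a b c : ℝ}

lemma nonneg (p : ℕ+ × ℕ+) : 0 ≤ maxSummand a b c p := by
  unfold maxSummand
  positivity

lemma apply_swap (p : ℕ+ × ℕ+) : maxSummand a b c p.swap = maxSummand b a c p := by
  simp only [maxSummand, Prod.fst_swap, Prod.snd_swap, max_comm, mul_comm]

lemma summable_swap (h : Summable (maxSummand a b c)) : Summable (maxSummand b a c) :=
  (h.comp_injective Prod.swap_injective).congr apply_swap

lemma eq_of_le {m n : ℕ+} (hmn : m ≤ n) :
    maxSummand a b c (m, n) = 1 / ((m : ℝ) ^ a * (n : ℝ) ^ (b + c)) := by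
  have hn : (0 : ℝ) < n := by positivity
  have hmax : max (m : ℝ) n = n := max_eq_right (by exact_mod_cast hmn)
  rw [maxSummand, hmax, mul_assoc, ← Real.rpow_add hn]

lemma one_lt_add_of_summable (h : Summable (maxSummand a b c)) : 1 < b + c := by
  have hcolumn : Summable fun n : ℕ+ => maxSummand a b c (1, n) :=
    h.comp_injective (Prod.mk_right_injective 1)
  refine summable_pnat_one_div_rpow_iff.1 (hcolumn.congr fun n => ?_)
  simp [eq_of_le (one_le (a := n))]

lemma isTheta_on_sector :
    (fun p : Σ k : ℕ+, Fin k => maxSummand a b c (p.1, p.1 + p.2.1.succPNat)) =Θ[cofinite]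
      fun p => 1 / (p.1 : ℝ) ^ (a + b + c) := by
  have hsnd : (fun p : Σ k : ℕ+, Fin k => ((p.1 + p.2.1.succPNat : ℕ+) : ℝ)) =Θ[cofinite]
      fun p => (p.1 : ℝ) := by
    refine isTheta_of_le_of_le_mul 2 (fun p => by positivity) (fun p => ?_) fun p => ?_
    · exact_mod_cast (PNat.lt_add_right p.1 p.2.1.succPNat).le
    · have : p.1 + (p.2.1 + 1) ≤ 2 * (p.1 : ℕ) := by omega
      simpa using (by exact_mod_cast this : (p.1 + (p.2.1 + 1) : ℝ) ≤ 2 * p.1)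
  have hpow := hsnd.rpow (r := b + c) (.of_forall fun p => by positivity)
    (.of_forall fun p => by positivity)
  have hdiag (p : Σ k : ℕ+, Fin k) :
      1 / (p.1 : ℝ) ^ (a + b + c) = 1 / ((p.1 : ℝ) ^ a * (p.1 : ℝ) ^ (b + c)) := by
    rw [add_assoc, Real.rpow_add (by positivity)]
  simp_rw [eq_of_le (PNat.lt_add_right _ _).le, hdiag]
  exact (isTheta_refl _ _).div ((isTheta_refl _ _).mul hpow)

lemma two_lt_add_of_summable (h : Summable (maxSummand a b c)) : 2 < a + b + c := by
  have hinj : Function.Injective fun p : Σ k : ℕ+, Fin k => (p.1, p.1 + p.2.1.succPNat) := by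
    rintro ⟨k, i⟩ ⟨k', i'⟩ hik
    obtain ⟨rfl, hi⟩ := Prod.mk.inj hik
    simpa [Fin.ext_iff] using hi
  have hsector := isTheta_on_sector.summable_iff.1 (h.comp_injective hinj)
  have hweighted := (summable_sigma_fst_iff (β := fun k : ℕ+ => Fin k)
    (g := fun k => 1 / (k : ℝ) ^ (a + b + c)) fun k => by positivity).1 hsector
  have hcard (k : ℕ+) : Fintype.card (Fin k) * (1 / (k : ℝ) ^ (a + b + c)) =
      1 / (k : ℝ) ^ (a + b + c - 1) := by
    rw [Real.rpow_sub_one (by positivity), Fintype.card_fin, mul_one_div, one_div_div]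
  linarith [summable_pnat_one_div_rpow_iff.1 (hweighted.congr hcard)]

lemma exists_forall_le_one_div_rpow_mul (hbc : 1 < b + c) (habc : 2 < a + b + c) :
    ∃ p q : ℝ, 1 < p ∧ 1 < q ∧ ∀ m n : ℕ+, m ≤ n →
      maxSummand a b c (m, n) ≤ 1 / (m : ℝ) ^ p * (1 / (n : ℝ) ^ q) := by
  obtain ⟨t, hlt, htl⟩ : ∃ t, max 0 (1 - a) < t ∧ t < b + c - 1 :=
    exists_between (max_lt (by linarith) (by linarith))
  obtain ⟨ht, hat⟩ := max_lt_iff.1 hlt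
  refine ⟨a + t, b + c - t, by linarith, by linarith, fun m n hmn => ?_⟩
  have hm : (0 : ℝ) < m := by positivity
  have hn : (0 : ℝ) < n := by positivity
  have hpow : (m : ℝ) ^ t ≤ (n : ℝ) ^ t :=
    Real.rpow_le_rpow hm.le (by exact_mod_cast hmn) ht.le
  rw [eq_of_le hmn, one_div_mul_one_div]
  refine one_div_le_one_div_of_le (by positivity) ?_
  calc (m : ℝ) ^ (a + t) * (n : ℝ) ^ (b + c - t)
      = (m : ℝ) ^ a * (n : ℝ) ^ (b + c - t) * (m : ℝ) ^ t := by rw [Real.rpow_add hm]; ring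
    _ ≤ (m : ℝ) ^ a * (n : ℝ) ^ (b + c - t) * (n : ℝ) ^ t := by gcongr
    _ = (m : ℝ) ^ a * (n : ℝ) ^ (b + c) := by
      rw [mul_assoc, ← Real.rpow_add hn, sub_add_cancel]

lemma summable_of_one_lt_add_of_two_lt_add (hac : 1 < a + c) (hbc : 1 < b + c)
    (habc : 2 < a + b + c) : Summable (maxSummand a b c) := by
  obtain ⟨p, q, hp, hq, hle⟩ := exists_forall_le_one_div_rpow_mul hbc habc
  obtain ⟨p', q', hp', hq', hle'⟩ :=
    exists_forall_le_one_div_rpow_mul (a := b) (b := a) hac (by linarith)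
  have hprod {u v : ℝ} (hu : 1 < u) (hv : 1 < v) :
      Summable fun x : ℕ+ × ℕ+ => 1 / (x.1 : ℝ) ^ u * (1 / (x.2 : ℝ) ^ v) :=
    (summable_pnat_one_div_rpow_iff.2 hu).mul_of_nonneg (summable_pnat_one_div_rpow_iff.2 hv)
      (fun n => by positivity) fun n => by positivity
  refine .of_nonneg_of_le nonneg (fun x => ?_)
    ((hprod hp hq).add ((hprod hp' hq').comp_injective Prod.swap_injective))
  obtain hx | hx := le_total x.1 x.2
  · exact le_add_of_le_of_nonneg (hle _ _ hx) (by dsimp; positivity)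
  · rw [← apply_swap]
    exact le_add_of_nonneg_of_le (by positivity) (hle' _ _ hx)

lemma summable_iff :
    Summable (maxSummand a b c) ↔ 1 < a + c ∧ 1 < b + c ∧ 2 < a + b + c :=
  ⟨fun h => ⟨one_lt_add_of_summable (summable_swap h), one_lt_add_of_summable h,
      two_lt_add_of_summable h⟩,
    fun ⟨hac, hbc, habc⟩ => summable_of_one_lt_add_of_two_lt_add hac hbc habc⟩

end maxSummand

lemma wittenSummand_isTheta_maxSummand (s1 s2 s3 s4 : ℝ) :
    (fun p : ℕ+ × ℕ+ => 1 / ((p.1 : ℝ) ^ s1 * (p.2 : ℝ) ^ s2 * ((p.1 : ℝ) + (p.2 : ℝ)) ^ s3 *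
      ((p.1 : ℝ) + 2 * (p.2 : ℝ)) ^ s4)) =Θ[cofinite] maxSummand s1 s2 (s3 + s4) := by
  have hlinear {t : ℝ} (ht : 1 ≤ t) (s : ℝ) :
      (fun p : ℕ+ × ℕ+ => ((p.1 : ℝ) + t * p.2) ^ s) =Θ[cofinite]
        fun p => max (p.1 : ℝ) p.2 ^ s :=
    (isTheta_add_mul_max ht (fun p => by positivity) fun p => by positivity).rpow
      (.of_forall fun p => by positivity) (.of_forall fun p => by positivity)
  have hmax (p : ℕ+ × ℕ+) : maxSummand s1 s2 (s3 + s4) p = 1 / ((p.1 : ℝ) ^ s1 * (p.2 : ℝ) ^ s2 *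
      max (p.1 : ℝ) p.2 ^ s3 * max (p.1 : ℝ) p.2 ^ s4) := by
    rw [maxSummand, Real.rpow_add (by positivity), mul_assoc _ (_ ^ s3)]
  simp_rw [funext hmax]
  refine (isTheta_refl _ _).div ((IsTheta.mul (isTheta_refl _ _) ?_).mul (hlinear one_le_two s4))
  simpa only [one_mul] using hlinear le_rfl s3

theorem stmt1_general (s1 s2 s3 s4 : ℝ) :
    Summable (fun p : ℕ+ × ℕ+ =>
      1 / ((p.1 : ℝ) ^ s1 * (p.2 : ℝ) ^ s2 * ((p.1 : ℝ) + (p.2 : ℝ)) ^ s3 *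
        ((p.1 : ℝ) + 2 * (p.2 : ℝ)) ^ s4)) ↔
    (1 < s1 + s3 + s4 ∧ 1 < s2 + s3 + s4 ∧ 2 < s1 + s2 + s3 + s4) := by
  rw [(wittenSummand_isTheta_maxSummand s1 s2 s3 s4).summable_iff, maxSummand.summable_iff]
  simp only [add_assoc]

theorem stmt1 (s1 s2 s3 s4 : ℕ) :
    Summable (fun p : ℕ+ × ℕ+ =>
      1 / ((p.1 : ℝ) ^ s1 * (p.2 : ℝ) ^ s2 * ((p.1 : ℝ) + (p.2 : ℝ)) ^ s3 *
        ((p.1 : ℝ) + 2 * (p.2 : ℝ)) ^ s4)) ↔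
    (1 < s1 + s3 + s4 ∧ 1 < s2 + s3 + s4 ∧ 2 < s1 + s2 + s3 + s4) := by
  exact_mod_cast stmt1_general s1 s2 s3 s4
end

section
/- Let d ≥ 1 and let s1, …, sd and s be arbitrary (possibly negative) integers. The Mordell–Tornheim series ζ_MT(s1,…,sd;s) = ∑_{m1,…,md=1}^∞ m1^{−s1}⋯md^{−sd}(m1+⋯+md)^{−s} converges if and only if for every nonempty subset {i1,…,iℓ} of {1,2,…,d} one has s + s_{i1} + ⋯ + s_{iℓ} > ℓ. -/
/-!
Convergence: if `m j` is the largest coordinate, the sum of all coordinates lies between `m j` and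
`d * m j`, so it may be replaced by `m j`. Finitely many strict inequalities leave room for an
`ε > 0`, and the one attached to the subset made of `j` and the indices with `s i < 1 + ε` bounds
the term by a constant times `∏ i, m i ^ (-(1 + ε))`, whose sum is a product of convergent series.

Divergence: if the inequality fails for `T`, consider the `n ^ |T|` points with coordinates in
`[n, 2n)` on `T` and equal to `1` elsewhere. There the terms are comparable to
`n ^ (-(s₀ + ∑ i ∈ T, s i))`, which is at least `n ^ (-|T|)`, so the total over these points does
not tend to `0`, although they leave every finite set as `n` grows.
-/

open Finset Filter Topology

theorem rpow_le_rpow_abs_mul_rpow {x y K : ℝ} (hx : 0 < x) (hy : 0 < y)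
    (hxy : x ≤ K * y) (hyx : y ≤ K * x) (s : ℝ) : x ^ s ≤ K ^ |s| * y ^ s := by
  have hK : 0 < K := pos_of_mul_pos_left (hx.trans_le hxy) hy.le
  rcases le_total 0 s with hs | hs
  · rw [abs_of_nonneg hs, ← Real.mul_rpow hK.le hy.le]
    exact Real.rpow_le_rpow hx.le hxy hs
  · have hle : y / K ≤ x := (div_le_iff₀' hK).2 hyx
    calc x ^ s ≤ (y / K) ^ s := Real.rpow_le_rpow_of_nonpos (by positivity) hle hs
      _ = K ^ |s| * y ^ s := by
        rw [abs_of_nonpos hs, Real.div_rpow hy.le hK.le, Real.rpow_neg hK.le, div_eq_inv_mul]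

theorem summable_pi_prod_of_nonneg {ι : Type*} [Fintype ι] {κ : ι → Type*} {g : ∀ i, κ i → ℝ}
    (hg₀ : ∀ i k, 0 ≤ g i k) (hg : ∀ i, Summable (g i)) :
    Summable fun m : ∀ i, κ i => ∏ i, g i (m i) := by
  classical
  refine summable_of_sum_le (c := ∏ i, ∑' k, g i k) (fun m => prod_nonneg fun i _ => hg₀ i _)
    fun F => ?_
  have hF : F ⊆ Fintype.piFinset fun i => F.image fun m => m i := fun m hm =>
    Fintype.mem_piFinset.2 fun i => mem_image_of_mem _ hm
  calc ∑ m ∈ F, ∏ i, g i (m i)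
      ≤ ∑ m ∈ Fintype.piFinset fun i => F.image fun m => m i, ∏ i, g i (m i) :=
        sum_le_sum_of_subset_of_nonneg hF fun m _ _ => prod_nonneg fun i _ => hg₀ i _
    _ = ∏ i, ∑ k ∈ F.image fun m => m i, g i k := (prod_univ_sum _ _).symm
    _ ≤ ∏ i, ∑' k, g i k := prod_le_prod (fun i _ => sum_nonneg fun k _ => hg₀ i k)
        fun i _ => (hg i).sum_le_tsum _ fun k _ => hg₀ i k

theorem summable_pnat_rpow {p : ℝ} : Summable (fun n : ℕ+ => ((n : ℕ) : ℝ) ^ p) ↔ p < -1 :=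
  (summable_pnat_iff_summable_nat (f := fun n : ℕ => (n : ℝ) ^ p)).trans Real.summable_nat_rpow

theorem exists_pos_card_mul_le_of_card_lt {ι : Type*} [Finite ι] {s : ι → ℝ}
    {s₀ : ℝ} (h : ∀ T : Finset ι, T.Nonempty → (T.card : ℝ) < s₀ + ∑ i ∈ T, s i) :
    ∃ ε > 0, ∀ T : Finset ι, T.Nonempty → T.card * (1 + ε) ≤ s₀ + ∑ i ∈ T, s i := by
  have near_zero (T : Finset ι) :
      ∀ᶠ ε : ℝ in 𝓝[>] 0, T.Nonempty → T.card * (1 + ε) ≤ s₀ + ∑ i ∈ T, s i := by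
    by_cases hT : T.Nonempty
    · have hlim : Tendsto (fun ε : ℝ => T.card * (1 + ε)) (𝓝[>] 0) (𝓝 T.card) :=
        tendsto_nhdsWithin_of_tendsto_nhds (Continuous.tendsto' (by fun_prop) _ _ (by simp))
      filter_upwards [hlim.eventually_lt_const (h T hT)] with ε hε _ using hε.le
    · exact .of_forall fun _ hT' => absurd hT' hT
  obtain ⟨ε, hε, hpos⟩ := ((eventually_all.2 near_zero).and self_mem_nhdsWithin).exists
  exact ⟨ε, hpos, hε⟩

section

variable {ι : Type*} [Fintype ι]

theorem one_le_rpow_mul_prod_rpow {x a : ι → ℝ} {c : ℝ} {j : ι} (hx : ∀ i, 1 ≤ x i)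
    (hxj : ∀ i, x i ≤ x j) (h : ∀ T : Finset ι, T.Nonempty → 0 ≤ c + ∑ i ∈ T, a i) :
    1 ≤ x j ^ c * ∏ i, x i ^ a i := by
  classical
  have hx₀ (i : ι) : 0 < x i := one_pos.trans_le (hx i)
  let T : Finset ι := {i | i = j ∨ a i < 0}
  have hT : ∏ i ∈ T, x j ^ a i ≤ ∏ i, x i ^ a i := by
    rw [prod_filter]
    refine prod_le_prod (fun i _ => ?_) fun i _ => ?_
    · have := hx₀ j
      positivity
    · split_ifs with hi
      · rcases hi with rfl | hai
        · rfl
        · exact Real.rpow_le_rpow_of_nonpos (hx₀ i) (hxj i) hai.le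
      · exact Real.one_le_rpow (hx i) (not_lt.1 (not_or.1 hi).2)
  calc 1 ≤ x j ^ (c + ∑ i ∈ T, a i) := Real.one_le_rpow (hx j) (h T ⟨j, by simp [T]⟩)
    _ = x j ^ c * ∏ i ∈ T, x j ^ a i := by
      rw [Real.rpow_add (hx₀ j), Real.rpow_sum_of_pos (hx₀ j)]
    _ ≤ x j ^ c * ∏ i, x i ^ a i :=
      mul_le_mul_of_nonneg_left hT (Real.rpow_nonneg (hx₀ j).le c)

theorem prod_rpow_neg_mul_rpow_neg_le {x s t : ι → ℝ} {s₀ : ℝ} {j : ι} (hx : ∀ i, 1 ≤ x i)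
    (hxj : ∀ i, x i ≤ x j)
    (h : ∀ T : Finset ι, T.Nonempty → ∑ i ∈ T, t i ≤ s₀ + ∑ i ∈ T, s i) :
    (∏ i, x i ^ (-s i)) * x j ^ (-s₀) ≤ ∏ i, x i ^ (-t i) := by
  have hx₀ (i : ι) : 0 < x i := one_pos.trans_le (hx i)
  have one_le : 1 ≤ x j ^ s₀ * ∏ i, x i ^ (s i - t i) :=
    one_le_rpow_mul_prod_rpow hx hxj fun T hT => by
      rw [sum_sub_distrib]
      linarith [h T hT]
  have lhs_nonneg : 0 ≤ (∏ i, x i ^ (-s i)) * x j ^ (-s₀) :=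
    mul_nonneg (prod_nonneg fun i _ => Real.rpow_nonneg (hx₀ i).le _)
      (Real.rpow_nonneg (hx₀ j).le _)
  calc (∏ i, x i ^ (-s i)) * x j ^ (-s₀)
      ≤ ((∏ i, x i ^ (-s i)) * x j ^ (-s₀)) * (x j ^ s₀ * ∏ i, x i ^ (s i - t i)) :=
        le_mul_of_one_le_right lhs_nonneg one_le
    _ = (x j ^ (-s₀) * x j ^ s₀) * ∏ i, x i ^ (-s i) * x i ^ (s i - t i) := by
        rw [prod_mul_distrib]
        ring
    _ = ∏ i, x i ^ (-t i) := by simp [← Real.rpow_add, hx₀, neg_add_eq_sub]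

theorem rpow_sum_le_card_rpow_abs_mul_rpow {x : ι → ℝ} {j : ι} (hx : ∀ i, 0 ≤ x i)
    (hj : 0 < x j) (hxj : ∀ i, x i ≤ x j) (p : ℝ) :
    (∑ i, x i) ^ p ≤ (Fintype.card ι : ℝ) ^ |p| * x j ^ p := by
  have max_le_sum : x j ≤ ∑ i, x i := single_le_sum (fun i _ => hx i) (mem_univ j)
  have sum_le_card_mul_max : ∑ i, x i ≤ Fintype.card ι * x j := by
    simpa using sum_le_card_nsmul univ x _ fun i _ => hxj i
  have one_le_card : (1 : ℝ) ≤ Fintype.card ι := by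
    exact_mod_cast Fintype.card_pos_iff.2 ⟨j⟩
  have sum_pos : 0 < ∑ i, x i := hj.trans_le max_le_sum
  exact rpow_le_rpow_abs_mul_rpow sum_pos hj sum_le_card_mul_max
    (max_le_sum.trans (le_mul_of_one_le_left sum_pos.le one_le_card)) p

/-- The general term of the Mordell–Tornheim series, with real exponents and the summation
variables indexed by an arbitrary finite type. -/
noncomputable def mordellTornheimTerm (s : ι → ℝ) (s₀ : ℝ) (m : ι → ℕ+) : ℝ :=
  (∏ i, ((m i : ℕ) : ℝ) ^ (-s i)) * (∑ i, ((m i : ℕ) : ℝ)) ^ (-s₀)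

theorem mordellTornheimTerm_nonneg (s : ι → ℝ) (s₀ : ℝ) (m : ι → ℕ+) :
    0 ≤ mordellTornheimTerm s s₀ m := by
  unfold mordellTornheimTerm
  positivity

theorem mordellTornheimTerm_le_mul_prod_rpow [Nonempty ι] {s t : ι → ℝ} {s₀ : ℝ}
    (h : ∀ T : Finset ι, T.Nonempty → ∑ i ∈ T, t i ≤ s₀ + ∑ i ∈ T, s i) (m : ι → ℕ+) :
    mordellTornheimTerm s s₀ m ≤
      (Fintype.card ι : ℝ) ^ |s₀| * ∏ i, ((m i : ℕ) : ℝ) ^ (-t i) := by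
  obtain ⟨j, hj⟩ := Finite.exists_max m
  have hm (i : ι) : (1 : ℝ) ≤ (m i : ℕ) := by exact_mod_cast (m i).pos
  have hmj (i : ι) : ((m i : ℕ) : ℝ) ≤ (m j : ℕ) := by exact_mod_cast hj i
  have sum_rpow_le : (∑ i, ((m i : ℕ) : ℝ)) ^ (-s₀) ≤
      (Fintype.card ι : ℝ) ^ |s₀| * ((m j : ℕ) : ℝ) ^ (-s₀) := by
    simpa only [abs_neg] using rpow_sum_le_card_rpow_abs_mul_rpow
      (x := fun i => ((m i : ℕ) : ℝ)) (fun i => Nat.cast_nonneg _) (one_pos.trans_le (hm j))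
      hmj (-s₀)
  calc mordellTornheimTerm s s₀ m
      ≤ (∏ i, ((m i : ℕ) : ℝ) ^ (-s i)) *
          ((Fintype.card ι : ℝ) ^ |s₀| * ((m j : ℕ) : ℝ) ^ (-s₀)) :=
        mul_le_mul_of_nonneg_left sum_rpow_le (by positivity)
    _ = (Fintype.card ι : ℝ) ^ |s₀| *
          ((∏ i, ((m i : ℕ) : ℝ) ^ (-s i)) * ((m j : ℕ) : ℝ) ^ (-s₀)) := by ring
    _ ≤ (Fintype.card ι : ℝ) ^ |s₀| * ∏ i, ((m i : ℕ) : ℝ) ^ (-t i) := by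
        gcongr
        exact prod_rpow_neg_mul_rpow_neg_le hm hmj h

theorem summable_mordellTornheimTerm [Nonempty ι] {s : ι → ℝ} {s₀ : ℝ}
    (h : ∀ T : Finset ι, T.Nonempty → (T.card : ℝ) < s₀ + ∑ i ∈ T, s i) :
    Summable (mordellTornheimTerm s s₀) := by
  obtain ⟨ε, hε, hcard⟩ := exists_pos_card_mul_le_of_card_lt h
  have hprod : Summable fun m : ι → ℕ+ => ∏ i, ((m i : ℕ) : ℝ) ^ (-(1 + ε)) :=
    summable_pi_prod_of_nonneg (g := fun _ (n : ℕ+) => ((n : ℕ) : ℝ) ^ (-(1 + ε)))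
      (fun _ _ => by positivity) fun _ => summable_pnat_rpow.2 (by linarith)
  have hle (T : Finset ι) (hT : T.Nonempty) : ∑ i ∈ T, (1 + ε) ≤ s₀ + ∑ i ∈ T, s i := by
    simpa only [sum_const, nsmul_eq_mul] using hcard T hT
  exact (hprod.mul_left ((Fintype.card ι : ℝ) ^ |s₀|)).of_nonneg_of_le
    (mordellTornheimTerm_nonneg s s₀)
    (mordellTornheimTerm_le_mul_prod_rpow (t := fun _ => 1 + ε) hle)

open Classical in
/-- The points of `ι → ℕ+` whose coordinates lie in `[n, 2n)` on `T` and equal `1` off `T`: the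
terms of a Mordell–Tornheim series have a single order of magnitude there. -/
noncomputable def doublingBox (T : Finset ι) (n : ℕ+) : Finset (ι → ℕ+) :=
  Fintype.piFinset fun i => if i ∈ T then Ico n (2 * n) else {1}

theorem mem_doublingBox {T : Finset ι} {n : ℕ+} {m : ι → ℕ+} :
    m ∈ doublingBox T n ↔ (∀ i ∈ T, n ≤ m i ∧ m i < 2 * n) ∧ ∀ i ∉ T, m i = 1 := by
  simp only [doublingBox, Fintype.mem_piFinset, ← forall_and]
  refine forall_congr' fun i => ?_
  by_cases hi : i ∈ T <;> simp [hi]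

theorem card_doublingBox (T : Finset ι) (n : ℕ+) :
    (doublingBox T n).card = (n : ℕ) ^ T.card := by
  classical
  have card_Ico : (Ico n (2 * n)).card = n := by
    rw [PNat.card_Ico, PNat.mul_coe, PNat.val_ofNat]
    omega
  simp [doublingBox, Fintype.card_piFinset, apply_ite Finset.card, card_Ico]

theorem exists_disjoint_doublingBox {T : Finset ι} (hT : T.Nonempty) (F : Finset (ι → ℕ+)) :
    ∃ n, Disjoint (doublingBox T n) F := by
  obtain ⟨j, hj⟩ := hT
  obtain ⟨N, hN⟩ := (F.image fun m => m j).exists_le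
  refine ⟨N + 1, disjoint_left.2 fun m hm hmF => ?_⟩
  have lower : N + 1 ≤ m j := ((mem_doublingBox.1 hm).1 j hj).1
  have upper : m j ≤ N := hN _ (mem_image_of_mem _ hmF)
  exact (PNat.lt_add_right N 1).not_ge (lower.trans upper)

theorem le_of_mem_doublingBox {T : Finset ι} {n : ℕ+} {m : ι → ℕ+} (hm : m ∈ doublingBox T n)
    {i : ι} (hi : i ∈ T) : ((n : ℕ) : ℝ) ≤ (m i : ℕ) := by
  exact_mod_cast ((mem_doublingBox.1 hm).1 i hi).1

theorem le_two_mul_of_mem_doublingBox {T : Finset ι} {n : ℕ+} {m : ι → ℕ+}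
    (hm : m ∈ doublingBox T n) (i : ι) : ((m i : ℕ) : ℝ) ≤ 2 * (n : ℕ) := by
  obtain ⟨on_T, off_T⟩ := mem_doublingBox.1 hm
  by_cases hi : i ∈ T
  · exact_mod_cast (on_T i hi).2.le
  · have hn : (1 : ℝ) ≤ (n : ℕ) := by exact_mod_cast n.pos
    rw [off_T i hi, PNat.one_coe, Nat.cast_one]
    linarith

theorem rpow_neg_sum_le_of_mem_doublingBox (s : ι → ℝ) {T : Finset ι} {n : ℕ+} {m : ι → ℕ+}
    (hm : m ∈ doublingBox T n) : ((n : ℕ) : ℝ) ^ (-∑ i ∈ T, s i) ≤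
      (∏ i ∈ T, 2 ^ |s i|) * ∏ i, ((m i : ℕ) : ℝ) ^ (-s i) := by
  have hn : (0 : ℝ) < (n : ℕ) := by exact_mod_cast n.pos
  have hm₀ (i : ι) : (0 : ℝ) < (m i : ℕ) := by exact_mod_cast (m i).pos
  have restrict : ∏ i, ((m i : ℕ) : ℝ) ^ (-s i) = ∏ i ∈ T, ((m i : ℕ) : ℝ) ^ (-s i) :=
    (prod_subset (subset_univ T) fun i _ hi => by simp [(mem_doublingBox.1 hm).2 i hi]).symm
  rw [restrict, ← prod_mul_distrib, ← sum_neg_distrib, Real.rpow_sum_of_pos hn]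
  refine prod_le_prod (fun i _ => by positivity) fun i hi => ?_
  simpa only [abs_neg] using rpow_le_rpow_abs_mul_rpow hn (hm₀ i)
    (by linarith [le_of_mem_doublingBox hm hi, hm₀ i]) (le_two_mul_of_mem_doublingBox hm i) (-s i)

theorem rpow_le_rpow_sum_of_mem_doublingBox {T : Finset ι} (hT : T.Nonempty) {n : ℕ+}
    {m : ι → ℕ+} (hm : m ∈ doublingBox T n) (p : ℝ) :
    ((n : ℕ) : ℝ) ^ p ≤ (2 * Fintype.card ι) ^ |p| * (∑ i, ((m i : ℕ) : ℝ)) ^ p := by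
  obtain ⟨j, hj⟩ := hT
  have hn : (0 : ℝ) < (n : ℕ) := by exact_mod_cast n.pos
  have one_le_card : (1 : ℝ) ≤ Fintype.card ι := by
    exact_mod_cast Fintype.card_pos_iff.2 ⟨j⟩
  have le_sum : ((n : ℕ) : ℝ) ≤ ∑ i, ((m i : ℕ) : ℝ) :=
    (le_of_mem_doublingBox hm hj).trans (single_le_sum (f := fun i => ((m i : ℕ) : ℝ))
      (fun i _ => Nat.cast_nonneg _) (mem_univ j))
  have sum_le : ∑ i, ((m i : ℕ) : ℝ) ≤ Fintype.card ι * (2 * (n : ℕ)) := by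
    simpa using sum_le_card_nsmul univ (fun i => ((m i : ℕ) : ℝ)) _
      fun i _ => le_two_mul_of_mem_doublingBox hm i
  have sum_pos : 0 < ∑ i, ((m i : ℕ) : ℝ) := hn.trans_le le_sum
  exact rpow_le_rpow_abs_mul_rpow hn sum_pos
    (le_sum.trans (le_mul_of_one_le_left sum_pos.le (by linarith))) (by linarith) p

theorem exists_rpow_le_mul_mordellTornheimTerm (s : ι → ℝ) (s₀ : ℝ) {T : Finset ι}
    (hT : T.Nonempty) : ∃ C > 0, ∀ n, ∀ m ∈ doublingBox T n,
      ((n : ℕ) : ℝ) ^ (-(s₀ + ∑ i ∈ T, s i)) ≤ C * mordellTornheimTerm s s₀ m := by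
  have : Nonempty ι := hT.to_type
  refine ⟨(∏ i ∈ T, 2 ^ |s i|) * (2 * Fintype.card ι) ^ |s₀|, by positivity, fun n m hm => ?_⟩
  have hn : (0 : ℝ) < (n : ℕ) := by exact_mod_cast n.pos
  have sum_bound := rpow_le_rpow_sum_of_mem_doublingBox hT hm (-s₀)
  rw [abs_neg] at sum_bound
  calc ((n : ℕ) : ℝ) ^ (-(s₀ + ∑ i ∈ T, s i))
      = ((n : ℕ) : ℝ) ^ (-∑ i ∈ T, s i) * ((n : ℕ) : ℝ) ^ (-s₀) := by
        rw [neg_add_rev, Real.rpow_add hn]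
    _ ≤ ((∏ i ∈ T, 2 ^ |s i|) * ∏ i, ((m i : ℕ) : ℝ) ^ (-s i)) *
          ((2 * Fintype.card ι) ^ |s₀| * (∑ i, ((m i : ℕ) : ℝ)) ^ (-s₀)) :=
        mul_le_mul (rpow_neg_sum_le_of_mem_doublingBox s hm) sum_bound (by positivity)
          (by positivity)
    _ = (∏ i ∈ T, 2 ^ |s i|) * (2 * Fintype.card ι) ^ |s₀| * mordellTornheimTerm s s₀ m := by
        rw [mordellTornheimTerm]
        ring

theorem card_lt_of_summable_mordellTornheimTerm {s : ι → ℝ} {s₀ : ℝ}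
    (h : Summable (mordellTornheimTerm s s₀)) {T : Finset ι} (hT : T.Nonempty) :
    (T.card : ℝ) < s₀ + ∑ i ∈ T, s i := by
  by_contra! hle
  obtain ⟨C, hC, hbound⟩ := exists_rpow_le_mul_mordellTornheimTerm s s₀ hT
  obtain ⟨F, hF⟩ := summable_iff_vanishing_norm.1 h C⁻¹ (inv_pos.2 hC)
  obtain ⟨n, hn⟩ := exists_disjoint_doublingBox hT F
  have hn₁ : (1 : ℝ) ≤ (n : ℕ) := by exact_mod_cast n.pos
  have box_sum_lt : C * ∑ m ∈ doublingBox T n, mordellTornheimTerm s s₀ m < 1 := by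
    rw [← lt_inv_mul_iff₀ hC, mul_one]
    exact (le_abs_self _).trans_lt (hF _ hn)
  have one_le_box_sum : 1 ≤ C * ∑ m ∈ doublingBox T n, mordellTornheimTerm s s₀ m := by
    calc (1 : ℝ) ≤ ((n : ℕ) : ℝ) ^ (T.card - (s₀ + ∑ i ∈ T, s i)) :=
          Real.one_le_rpow hn₁ (sub_nonneg.2 hle)
      _ = (doublingBox T n).card • ((n : ℕ) : ℝ) ^ (-(s₀ + ∑ i ∈ T, s i)) := by
          rw [sub_eq_add_neg, Real.rpow_add (by linarith), Real.rpow_natCast, card_doublingBox,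
            nsmul_eq_mul, Nat.cast_pow]
      _ ≤ ∑ m ∈ doublingBox T n, C * mordellTornheimTerm s s₀ m :=
          card_nsmul_le_sum _ _ _ (hbound n)
      _ = C * ∑ m ∈ doublingBox T n, mordellTornheimTerm s s₀ m := (mul_sum _ _ _).symm
  exact box_sum_lt.not_ge one_le_box_sum

theorem stmt2_general [Nonempty ι] (s : ι → ℝ) (s₀ : ℝ) :
    Summable (mordellTornheimTerm s s₀) ↔
      ∀ T : Finset ι, T.Nonempty → (T.card : ℝ) < s₀ + ∑ i ∈ T, s i :=
  ⟨fun h _ hT => card_lt_of_summable_mordellTornheimTerm h hT, summable_mordellTornheimTerm⟩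

end

theorem stmt2 (d : ℕ) (hd : 1 ≤ d) (s : Fin d → ℤ) (s0 : ℤ) :
    Summable (fun m : Fin d → ℕ+ =>
      (∏ i, ((m i : ℕ) : ℝ) ^ (-(s i))) * (∑ i, ((m i : ℕ) : ℝ)) ^ (-s0)) ↔
    ∀ T : Finset (Fin d), T.Nonempty → (T.card : ℤ) < s0 + ∑ i ∈ T, s i := by
  have : Nonempty (Fin d) := ⟨⟨0, hd⟩⟩
  have h := stmt2_general (fun i => (s i : ℝ)) s0
  unfold mordellTornheimTerm at h
  simp only [← Int.cast_neg, Real.rpow_intCast] at h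
  exact_mod_cast h
end

section
/- Let r ≥ 1 and n1, …, nr be positive integers, and let x1, …, xr be nonzero real numbers with x := x1 + ⋯ + xr ≠ 0. Then ∏_{j=1}^r x_j^{−n_j} = ∑_{j=1}^r ∑_{(a_k)_{k≠j}, 0 ≤ a_k ≤ n_k−1} M_j · x^{−(n_j + A_j)} · ∏_{k≠j} x_k^{−(n_k − a_k)}, where A_j = ∑_{k≠j} a_k and M_j = (n_j + A_j − 1)!/(n_j − 1)! · ∏_{k≠j} 1/a_k!. -/
/-!
Divide by the left-hand side and put `y j = x j / x`, so that `∑ j, y j = 1`. When the `y j` are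
probabilities, draw colours independently, colour `j` with probability `y j`, until some colour `j`
has appeared `n j` times. The summand indexed by `j` and `a` becomes the probability that colour `j`
stops the process while every other colour `k` has been seen `a k` times, and the identity says that
the process stops.

Algebraically, Pascal's rule writes each multinomial term other than the one at the origin as a sum
over its predecessors. Summed over the box `∏ k, [0, n k)`, it cancels in the interior and equates
the contribution of the origin, which is `1`, with the contribution of the upper faces
`a j = n j - 1`.
-/

open Finset Function
open scoped Nat

section

variable {ι : Type*} [Fintype ι]

/-- The term with exponent vector `a` in the multinomial expansion of `(∑ k, y k) ^ ∑ k, a k`. For a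
probability vector `y` it is the probability that `∑ k, a k` independent draws have counts `a`. -/
def multinomialTerm {R : Type*} [CommSemiring R] (y : ι → R) (a : ι → ℕ) : R :=
  Nat.multinomial univ a * ∏ k, y k ^ a k

variable [DecidableEq ι]

@[to_additive]
theorem prod_update_eq_mul_prod_erase {α M : Type*} [CommMonoid M] (f : ι → α → M) (a : ι → α)
    (i : ι) (c : α) :
    ∏ k, f k (update a i c k) = f i c * ∏ k ∈ univ.erase i, f k (a k) := by
  rw [← mul_prod_erase _ _ (mem_univ i), update_self]
  congr 1
  exact prod_congr rfl fun k hk => by rw [update_of_ne (ne_of_mem_erase hk)]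

theorem sum_piFinset_range_eq_sum_update {M : Type*} [AddCommMonoid M] (n : ι → ℕ) (i : ι)
    (f : (ι → ℕ) → M) :
    ∑ a ∈ Fintype.piFinset (fun k => range (n k)), f a =
      ∑ a ∈ Fintype.piFinset (fun k => range (if k = i then 1 else n k)),
        ∑ m ∈ range (n i), f (update a i m) := by
  rw [← sum_product']
  refine sum_nbij' (fun a => (update a i 0, a i)) (fun p => update p.1 i p.2) ?_ ?_ ?_ ?_ ?_
  · simp only [mem_product, Fintype.mem_piFinset, mem_range]
    grind
  · simp only [mem_product, Fintype.mem_piFinset, mem_range]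
    grind
  · simp
  · intro p hp
    have hpi : p.1 i = 0 := by
      simpa using Fintype.mem_piFinset.1 (mem_product.1 hp).1 i
    ext1 <;> simp [← hpi]
  · simp

theorem sum_piFinset_range_pred_add_sum_face {M : Type*} [AddCommMonoid M] (n : ι → ℕ) {i : ι}
    (hi : 0 < n i) (f : (ι → ℕ) → M) :
    ∑ a ∈ Fintype.piFinset (fun k => range (n k)) with a i ≠ 0, f (update a i (a i - 1)) +
        ∑ a ∈ Fintype.piFinset (fun k => range (if k = i then 1 else n k)),
          f (update a i (n i - 1)) =
      ∑ a ∈ Fintype.piFinset (fun k => range (n k)), f a := by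
  rw [sum_filter, sum_piFinset_range_eq_sum_update n i, sum_piFinset_range_eq_sum_update n i,
    ← sum_add_distrib]
  refine sum_congr rfl fun a _ => ?_
  obtain ⟨N, hN⟩ := Nat.exists_eq_succ_of_ne_zero hi.ne'
  rw [hN, sum_range_succ', sum_range_succ]
  simp

theorem factorial_mul_prod_mul_multinomial_update (a : ι → ℕ) (i : ι) (m : ℕ) :
    m ! * (∏ k ∈ univ.erase i, (a k)!) * Nat.multinomial univ (update a i m) =
      (m + ∑ k ∈ univ.erase i, a k)! := by
  rw [← prod_update_eq_mul_prod_erase (fun _ b => b !),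
    ← sum_update_eq_add_sum_erase (fun _ b => b), Nat.multinomial_spec]

theorem succ_mul_multinomial_update_succ (a : ι → ℕ) (i : ι) (m : ℕ) :
    (m + 1) * Nat.multinomial univ (update a i (m + 1)) =
      (m + 1 + ∑ k ∈ univ.erase i, a k) * Nat.multinomial univ (update a i m) := by
  have hpos : 0 < m ! * ∏ k ∈ univ.erase i, (a k)! := by positivity
  refine Nat.eq_of_mul_eq_mul_left hpos ?_
  calc m ! * (∏ k ∈ univ.erase i, (a k)!) *
        ((m + 1) * Nat.multinomial univ (update a i (m + 1)))
      = (m + 1)! * (∏ k ∈ univ.erase i, (a k)!) * Nat.multinomial univ (update a i (m + 1)) := by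
        rw [Nat.factorial_succ]; ring
    _ = (m + 1 + ∑ k ∈ univ.erase i, a k) * (m + ∑ k ∈ univ.erase i, a k)! := by
        rw [factorial_mul_prod_mul_multinomial_update, Nat.add_right_comm, Nat.factorial_succ]
    _ = m ! * (∏ k ∈ univ.erase i, (a k)!) *
        ((m + 1 + ∑ k ∈ univ.erase i, a k) * Nat.multinomial univ (update a i m)) := by
        rw [← factorial_mul_prod_mul_multinomial_update]; ring

theorem mul_multinomial_eq_sum_mul_multinomial_pred (a : ι → ℕ) {i : ι} (hi : a i ≠ 0) :
    a i * Nat.multinomial univ a = (∑ k, a k) * Nat.multinomial univ (update a i (a i - 1)) := by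
  have h := succ_mul_multinomial_update_succ a i (a i - 1)
  rwa [Nat.sub_add_cancel (Nat.pos_of_ne_zero hi), update_eq_self,
    add_sum_erase _ _ (mem_univ i)] at h

theorem multinomial_eq_sum_multinomial_pred {a : ι → ℕ} (ha : a ≠ 0) :
    Nat.multinomial univ a =
      ∑ i with a i ≠ 0, Nat.multinomial univ (update a i (a i - 1)) := by
  have hsum : 0 < ∑ k, a k := Fintype.sum_pos (pos_iff_ne_zero.2 ha)
  refine Nat.eq_of_mul_eq_mul_left hsum ?_
  rw [mul_sum, sum_mul, ← sum_filter_of_ne fun i _ => left_ne_zero_of_mul]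
  exact sum_congr rfl fun i hi =>
    mul_multinomial_eq_sum_mul_multinomial_pred a (mem_filter.1 hi).2

section CommSemiring

variable {R : Type*} [CommSemiring R]

theorem mul_multinomialTerm_update_pred (y : ι → R) (a : ι → ℕ) (i : ι) {m : ℕ} (hm : m ≠ 0) :
    y i * multinomialTerm y (update a i (m - 1)) =
      Nat.multinomial univ (update a i (m - 1)) *
        (y i ^ m * ∏ k ∈ univ.erase i, y k ^ a k) := by
  rw [multinomialTerm, prod_update_eq_mul_prod_erase fun k b => y k ^ b, ← mul_pow_sub_one hm]
  ring

theorem multinomialTerm_eq_ite_add_sum_pred (y : ι → R) (a : ι → ℕ) :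
    multinomialTerm y a = (if a = 0 then 1 else 0) +
      ∑ i with a i ≠ 0, y i * multinomialTerm y (update a i (a i - 1)) := by
  split_ifs with ha
  · simp [ha, multinomialTerm, Nat.multinomial]
  rw [multinomialTerm, multinomial_eq_sum_multinomial_pred ha, Nat.cast_sum, sum_mul, zero_add]
  refine sum_congr rfl fun i hi => ?_
  rw [mul_multinomialTerm_update_pred y a i (mem_filter.1 hi).2,
    mul_prod_erase univ (fun k => y k ^ a k) (mem_univ i)]

theorem sum_multinomialTerm_eq_one_add (y : ι → R) {n : ι → ℕ} (hn : ∀ j, 0 < n j) :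
    ∑ a ∈ Fintype.piFinset (fun k => range (n k)), multinomialTerm y a =
      1 + ∑ i, ∑ a ∈ Fintype.piFinset (fun k => range (n k)) with a i ≠ 0,
        y i * multinomialTerm y (update a i (a i - 1)) := by
  have hzero : (0 : ι → ℕ) ∈ Fintype.piFinset fun k => range (n k) := by simp [hn]
  rw [sum_congr rfl fun a _ => multinomialTerm_eq_ite_add_sum_pred y a, sum_add_distrib,
    sum_ite_eq', if_pos hzero]
  simp only [sum_filter]
  rw [sum_comm]

end CommSemiring

theorem sum_sum_face_mul_multinomialTerm_eq_one {R : Type*} [CommRing R] {y : ι → R}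
    (hy : ∑ i, y i = 1) {n : ι → ℕ} (hn : ∀ j, 0 < n j) :
    ∑ i, ∑ a ∈ Fintype.piFinset (fun k => range (if k = i then 1 else n k)),
      y i * multinomialTerm y (update a i (n i - 1)) = 1 := by
  let box := Fintype.piFinset fun k => range (n k)
  let face i := Fintype.piFinset fun k => range (if k = i then 1 else n k)
  let interior := ∑ i, ∑ a ∈ box with a i ≠ 0, y i * multinomialTerm y (update a i (a i - 1))
  suffices interior + ∑ i, ∑ a ∈ face i, y i * multinomialTerm y (update a i (n i - 1)) =
      interior + 1 from add_left_cancel this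
  calc interior + ∑ i, ∑ a ∈ face i, y i * multinomialTerm y (update a i (n i - 1))
      = ∑ i, ∑ a ∈ box, y i * multinomialTerm y a := by
        rw [← sum_add_distrib]
        exact sum_congr rfl fun i _ =>
          sum_piFinset_range_pred_add_sum_face n (hn i) fun a => y i * multinomialTerm y a
    _ = ∑ a ∈ box, multinomialTerm y a := by rw [← sum_mul_sum, hy, one_mul]
    _ = interior + 1 := by rw [sum_multinomialTerm_eq_one_add y hn, add_comm]

section Field

variable {K : Type*} [Field K]

theorem cast_multinomial_update_pred [CharZero K] (a : ι → ℕ) (i : ι) {m : ℕ} (hm : 0 < m) :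
    (Nat.multinomial univ (update a i (m - 1)) : K) =
      (m + (∑ k ∈ univ.erase i, a k) - 1)! / (m - 1)! *
        ∏ k ∈ univ.erase i, (1 : K) / (a k)! := by
  have hfactorial (l : ℕ) : (l ! : K) ≠ 0 := Nat.cast_ne_zero.2 l.factorial_ne_zero
  have hprod : ∏ k ∈ univ.erase i, ((a k)! : K) ≠ 0 := prod_ne_zero_iff.2 fun k _ => hfactorial _
  have hpred := hfactorial (m - 1)
  rw [Nat.sub_add_comm hm, ← factorial_mul_prod_mul_multinomial_update, prod_div_distrib,
    prod_const_one]
  push_cast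
  field_simp

theorem prod_zpow_neg_mul_div_pow {x : ι → K} (hx : ∀ k, x k ≠ 0) (s : K) (n a : ι → ℕ) (j : ι) :
    (∏ k, x k ^ (-(n k : ℤ))) * ((x j / s) ^ n j * ∏ k ∈ univ.erase j, (x k / s) ^ a k) =
      s ^ (-((n j : ℤ) + ∑ k ∈ univ.erase j, (a k : ℤ))) *
        ∏ k ∈ univ.erase j, x k ^ (-((n k : ℤ) - (a k : ℤ))) := by
  have hj : x j ^ (-(n j : ℤ)) * (x j / s) ^ n j = (s ^ n j)⁻¹ := by
    rw [zpow_neg, zpow_natCast, div_pow, ← mul_div_assoc, inv_mul_cancel₀ (pow_ne_zero _ (hx j)),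
      one_div]
  have herase (k : ι) : x k ^ (-(n k : ℤ)) * (x k / s) ^ a k =
      (s ^ a k)⁻¹ * x k ^ (-((n k : ℤ) - (a k : ℤ))) := by
    rw [neg_sub, sub_eq_neg_add, zpow_add₀ (hx k), zpow_natCast, div_pow]
    ring
  have hs : s ^ (-((n j : ℤ) + ∑ k ∈ univ.erase j, (a k : ℤ))) =
      (s ^ n j)⁻¹ * ∏ k ∈ univ.erase j, (s ^ a k)⁻¹ := by
    rw [prod_inv_distrib, prod_pow_eq_pow_sum, ← mul_inv, ← pow_add, ← zpow_natCast, ← zpow_neg]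
    push_cast
    rfl
  rw [← mul_prod_erase _ _ (mem_univ j), mul_mul_mul_comm, hj, ← prod_mul_distrib, hs, mul_assoc,
    ← prod_mul_distrib]
  simp only [herase]

theorem stmt3_general {n : ι → ℕ} (hn : ∀ j, 0 < n j) {x : ι → K} (hx : ∀ j, x j ≠ 0)
    (hs : ∑ j, x j ≠ 0) :
    ∏ j, x j ^ (-(n j : ℤ)) =
      ∑ j, ∑ a ∈ Fintype.piFinset (fun k => range (if k = j then 1 else n k)),
        (Nat.multinomial univ (update a j (n j - 1)) : K)
          * (∑ i, x i) ^ (-((n j : ℤ) + ∑ k ∈ univ.erase j, (a k : ℤ)))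
          * ∏ k ∈ univ.erase j, x k ^ (-((n k : ℤ) - (a k : ℤ))) := by
  have hy : ∑ i, x i / ∑ j, x j = 1 := by rw [← sum_div, div_self hs]
  rw [← mul_one (∏ j, _), ← sum_sum_face_mul_multinomialTerm_eq_one hy hn]
  simp only [mul_sum]
  refine sum_congr rfl fun j _ => sum_congr rfl fun a _ => ?_
  rw [mul_multinomialTerm_update_pred (fun i => x i / ∑ j, x j) a j (hn j).ne', mul_left_comm,
    prod_zpow_neg_mul_div_pow hx, mul_assoc]

end Field

end

theorem stmt3 (r : ℕ) (hr : 1 ≤ r) (n : Fin r → ℕ) (hn : ∀ j, 0 < n j)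
    (x : Fin r → ℝ) (hx : ∀ j, x j ≠ 0) (hs : (∑ j, x j) ≠ 0) :
    ∏ j, (x j) ^ (-(n j : ℤ)) =
    ∑ j, ∑ a ∈ Fintype.piFinset (fun k => Finset.range (if k = j then 1 else n k)),
      (((n j + (∑ k ∈ Finset.univ.erase j, a k) - 1).factorial : ℝ) / ((n j - 1).factorial : ℝ)
          * ∏ k ∈ Finset.univ.erase j, (1 : ℝ) / ((a k).factorial : ℝ))
        * (∑ i, x i) ^ (-((n j : ℤ) + ∑ k ∈ Finset.univ.erase j, (a k : ℤ)))
        * ∏ k ∈ Finset.univ.erase j, (x k) ^ (-((n k : ℤ) - (a k : ℤ))) := by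
  simpa only [cast_multinomial_update_pred _ _ (hn _)] using stmt3_general hn hx hs
end

section
/- Let s1 be a nonnegative integer and s2, s3, s4 be positive integers. Then ζ_so(s1,s2,s3,s4) = ∑_{a2=0}^{s2−1} C(s3+a2−1, a2) · ζ_so(s1, s2−a2, 0, s4+s3+a2) + ∑_{a3=0}^{s3−1} C(s2+a3−1, a3) · ζ_so(s1, 0, s3−a3, s4+s2+a3), where C(n,k) denotes the binomial coefficient. -/
noncomputable def zetaSO (s1 s2 s3 s4 : ℕ) : ℝ :=
  ∑' (m : ℕ+) (n : ℕ+),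
    1 / ((m : ℝ) ^ s1 * (n : ℝ) ^ s2 * ((m : ℝ) + (n : ℝ)) ^ s3 * ((m : ℝ) + 2 * (n : ℝ)) ^ s4)

/-!
Since `n + (m + n) = m + 2 * n`, the partial fraction expansion of `1 / (x ^ a * y ^ b)` in powers
of `x + y`, applied with `x = n` and `y = m + n`, splits every summand of `zetaSO` into the summands
of the right-hand side. The expansion is the Chaundy–Bullard identity at `p = x / (x + y)`,
`q = y / (x + y)`. The series may then be rearranged because all of them converge absolutely: the
weight `(m + n) ^ s3 * (m + 2 * n) ^ s4` can be shared between `m` and `n` so that the summand is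
dominated by `1 / (m ^ u * n ^ v)` with `u, v > 1`.
-/

section PartialFractions

open Finset

section CommSemiring

variable {R : Type*} [CommSemiring R] {p q : R}

theorem mul_geom_sum_add_pow_of_add_eq_one (h : p + q = 1) (n : ℕ) :
    q * ∑ i ∈ range n, p ^ i + p ^ n = 1 := by
  induction n with
  | zero => simp
  | succ n ih =>
    calc q * ∑ i ∈ range (n + 1), p ^ i + p ^ (n + 1)
        = q * ∑ i ∈ range n, p ^ i + (p + q) * p ^ n := by rw [sum_range_succ]; ring
      _ = 1 := by rw [h, one_mul, ih]

theorem mul_sum_choose_succ_mul_pow_add (h : p + q = 1) (b n : ℕ) :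
    q * ∑ i ∈ range n, ((b + 1 + i).choose i : R) * p ^ i + ((b + n).choose (b + 1) : R) * p ^ n =
      ∑ i ∈ range n, ((b + i).choose i : R) * p ^ i := by
  induction n with
  | zero => simp
  | succ n ih =>
    have hsymm : (b + (n + 1)).choose (b + 1) = (b + 1 + n).choose n := by
      rw [← Nat.choose_symm_add, add_right_comm, add_assoc]
    have hpascal : (b + 1 + n).choose n = (b + n).choose n + (b + n).choose (b + 1) := by
      rw [← hsymm, ← add_assoc, Nat.choose_succ_succ, Nat.choose_symm_add]
    calc q * ∑ i ∈ range (n + 1), ((b + 1 + i).choose i : R) * p ^ i +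
          ((b + (n + 1)).choose (b + 1) : R) * p ^ (n + 1)
        = q * ∑ i ∈ range n, ((b + 1 + i).choose i : R) * p ^ i +
            (p + q) * (((b + 1 + n).choose n : R) * p ^ n) := by
          rw [sum_range_succ, hsymm]; ring
      _ = (q * ∑ i ∈ range n, ((b + 1 + i).choose i : R) * p ^ i +
            ((b + n).choose (b + 1) : R) * p ^ n) + ((b + n).choose n : R) * p ^ n := by
          rw [h, hpascal]; push_cast; ring
      _ = ∑ i ∈ range (n + 1), ((b + i).choose i : R) * p ^ i := by rw [ih, sum_range_succ]

theorem chaundy_bullard (h : p + q = 1) (a b : ℕ) :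
    q ^ (b + 1) * ∑ i ∈ range (a + 1), ((b + i).choose i : R) * p ^ i +
      p ^ (a + 1) * ∑ i ∈ range (b + 1), ((a + i).choose i : R) * q ^ i = 1 := by
  induction b with
  | zero => simpa using mul_geom_sum_add_pow_of_add_eq_one h (a + 1)
  | succ b ih =>
    rw [← mul_sum_choose_succ_mul_pow_add h b (a + 1)] at ih
    rw [sum_range_succ _ (b + 1), ← ih, add_left_comm b a 1]
    ring

end CommSemiring

variable {K : Type*} [Field K] {x y z : K}

theorem one_div_mul_mul_div_pow_mul_div_pow (hx : x ≠ 0) (hy : y ≠ 0) {a i : ℕ} (hi : i ≤ a)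
    (b : ℕ) :
    1 / (x ^ a * y ^ b) * ((y / z) ^ b * (x / z) ^ i) = 1 / (x ^ (a - i) * z ^ (b + i)) := by
  obtain ⟨k, rfl⟩ := Nat.exists_eq_add_of_le hi
  rw [Nat.add_sub_cancel_left, div_pow, div_pow, pow_add x, pow_add z]
  field_simp

theorem one_div_mul_mul_sum_mul_div_pow (hx : x ≠ 0) (hy : y ≠ 0) (a b : ℕ) (c : ℕ → K) :
    1 / (x ^ a * y ^ b) * ((y / z) ^ b * ∑ i ∈ range a, c i * (x / z) ^ i) =
      ∑ i ∈ range a, c i * (1 / (x ^ (a - i) * z ^ (b + i))) := by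
  simp only [mul_sum]
  refine sum_congr rfl fun i hi => ?_
  rw [← one_div_mul_mul_div_pow_mul_div_pow hx hy (mem_range.1 hi).le]
  ring

theorem one_div_pow_mul_pow_eq_sum_add_sum (hx : x ≠ 0) (hy : y ≠ 0) (hxy : x + y ≠ 0)
    {a b : ℕ} (ha : 0 < a) (hb : 0 < b) :
    1 / (x ^ a * y ^ b) =
      ∑ i ∈ range a, ((b + i - 1).choose i : K) * (1 / (x ^ (a - i) * (x + y) ^ (b + i))) +
      ∑ i ∈ range b, ((a + i - 1).choose i : K) * (1 / (y ^ (b - i) * (x + y) ^ (a + i))) := by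
  have hone : x / (x + y) + y / (x + y) = 1 := by rw [← add_div, div_self hxy]
  rw [← one_div_mul_mul_sum_mul_div_pow hx hy, ← one_div_mul_mul_sum_mul_div_pow hy hx,
    mul_comm (y ^ b), ← mul_add]
  obtain ⟨a, rfl⟩ := Nat.exists_eq_add_one.2 ha
  obtain ⟨b, rfl⟩ := Nat.exists_eq_add_one.2 hb
  simp only [add_right_comm _ 1, Nat.add_sub_cancel, chaundy_bullard hone, mul_one]

end PartialFractions

/-- The summand of `zetaSO`, as a function of real variables `x` (for `m`) and `y` (for `n`). -/
noncomputable def soSummand (s1 s2 s3 s4 : ℕ) (x y : ℝ) : ℝ :=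
  1 / (x ^ s1 * y ^ s2 * (x + y) ^ s3 * (x + 2 * y) ^ s4)

open Finset in
theorem soSummand_eq_sum_add_sum (s1 s4 : ℕ) {s2 s3 : ℕ} (h2 : 0 < s2) (h3 : 0 < s3) {x y : ℝ}
    (hy : y ≠ 0) (hxy : x + y ≠ 0) (hx2y : x + 2 * y ≠ 0) :
    soSummand s1 s2 s3 s4 x y =
      ∑ a2 ∈ range s2,
        ((s3 + a2 - 1).choose a2 : ℝ) * soSummand s1 (s2 - a2) 0 (s4 + s3 + a2) x y +
      ∑ a3 ∈ range s3,
        ((s2 + a3 - 1).choose a3 : ℝ) * soSummand s1 0 (s3 - a3) (s4 + s2 + a3) x y := by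
  have hsum : y + (x + y) = x + 2 * y := by ring
  have hfactor : soSummand s1 s2 s3 s4 x y =
      1 / (x ^ s1 * (x + 2 * y) ^ s4) * (1 / (y ^ s2 * (x + y) ^ s3)) := by
    rw [soSummand, one_div_mul_one_div]; ring
  rw [hfactor, one_div_pow_mul_pow_eq_sum_add_sum hy hxy (hsum ▸ hx2y) h2 h3, hsum, mul_add,
    mul_sum, mul_sum]
  congr 1 <;> refine sum_congr rfl fun i _ => ?_ <;>
    rw [soSummand, mul_left_comm, one_div_mul_one_div] <;> ring

section Convergence

theorem summable_pnat_prod_one_div_rpow_mul_rpow {u v : ℝ} (hu : 1 < u) (hv : 1 < v) :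
    Summable fun p : ℕ+ × ℕ+ => 1 / (((p.1 : ℕ) : ℝ) ^ u * ((p.2 : ℕ) : ℝ) ^ v) := by
  have hpnat {w : ℝ} (hw : 1 < w) : Summable fun n : ℕ+ => 1 / ((n : ℕ) : ℝ) ^ w :=
    (Real.summable_one_div_nat_rpow.2 hw).comp_injective PNat.coe_injective
  simpa only [one_div_mul_one_div] using (hpnat hu).mul_of_nonneg (hpnat hv)
    (fun n => by positivity) (fun n => by positivity)

theorem rpow_mul_rpow_le_add_pow_mul_add_two_mul_pow {x y : ℝ} (hx : 0 < x) (hy : 0 < y)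
    {α β : ℝ} (hα : 0 ≤ α) (hβ : 0 ≤ β) {c d : ℕ} (h : α + β = c + d) :
    x ^ α * y ^ β ≤ (x + y) ^ c * (x + 2 * y) ^ d := by
  calc x ^ α * y ^ β ≤ (x + y) ^ α * (x + y) ^ β := by gcongr <;> linarith
    _ = (x + y) ^ c * (x + y) ^ d := by
      rw [← Real.rpow_add (by positivity), h, Real.rpow_add (by positivity), Real.rpow_natCast,
        Real.rpow_natCast]
    _ ≤ (x + y) ^ c * (x + 2 * y) ^ d := by gcongr; linarith

theorem soSummand_le_one_div_rpow_mul_rpow {s1 s2 s3 s4 : ℕ} {x y : ℝ} (hx : 0 < x) (hy : 0 < y)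
    {α β : ℝ} (hα : 0 ≤ α) (hβ : 0 ≤ β) (h : α + β = s3 + s4) :
    soSummand s1 s2 s3 s4 x y ≤ 1 / (x ^ (s1 + α) * y ^ (s2 + β)) := by
  refine one_div_le_one_div_of_le (by positivity) ?_
  calc x ^ (s1 + α) * y ^ (s2 + β) = x ^ s1 * y ^ s2 * (x ^ α * y ^ β) := by
        rw [Real.rpow_add hx, Real.rpow_add hy, Real.rpow_natCast, Real.rpow_natCast]; ring
    _ ≤ x ^ s1 * y ^ s2 * ((x + y) ^ s3 * (x + 2 * y) ^ s4) := by
        gcongr ?_ * ?_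
        exact rpow_mul_rpow_le_add_pow_mul_add_two_mul_pow hx hy hα hβ h
    _ = x ^ s1 * y ^ s2 * (x + y) ^ s3 * (x + 2 * y) ^ s4 := by ring

variable {s1 s2 s3 s4 : ℕ}

theorem summable_soSummand (h1 : 1 < s1 + s3 + s4) (h2 : 1 < s2 + s3 + s4)
    (h : 2 < s1 + s2 + s3 + s4) :
    Summable fun p : ℕ+ × ℕ+ => soSummand s1 s2 s3 s4 p.1 p.2 := by
  have h1' : (2 : ℝ) ≤ s1 + s3 + s4 := by exact_mod_cast h1
  have h2' : (2 : ℝ) ≤ s2 + s3 + s4 := by exact_mod_cast h2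
  have h' : (3 : ℝ) ≤ s1 + s2 + s3 + s4 := by exact_mod_cast h
  -- Of the weight `s3 + s4`, just enough goes to `m` to give it total exponent at least `3 / 2`.
  obtain ⟨α, hα, hα_le, hm, hn⟩ : ∃ α : ℝ, 0 ≤ α ∧ α ≤ s3 + s4 ∧ 1 < s1 + α ∧
      1 < s2 + (s3 + s4 - α) := by
    refine ⟨max 0 (3 / 2 - s1), le_max_left _ _, max_le (by positivity) (by linarith), ?_, ?_⟩
    · linarith [le_max_right 0 (3 / 2 - (s1 : ℝ))]
    · rcases max_choice 0 (3 / 2 - (s1 : ℝ)) with hmax | hmax <;> rw [hmax] <;> linarith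
  refine (summable_pnat_prod_one_div_rpow_mul_rpow hm hn).of_nonneg_of_le
    (fun p => by unfold soSummand; positivity) fun p => ?_
  exact soSummand_le_one_div_rpow_mul_rpow (by positivity) (by positivity) hα
    (sub_nonneg.2 hα_le) (add_sub_cancel α _)

theorem hasSum_zetaSO (h1 : 1 < s1 + s3 + s4) (h2 : 1 < s2 + s3 + s4)
    (h : 2 < s1 + s2 + s3 + s4) :
    HasSum (fun p : ℕ+ × ℕ+ => soSummand s1 s2 s3 s4 p.1 p.2) (zetaSO s1 s2 s3 s4) := by
  have hsummable := summable_soSummand h1 h2 h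
  have htsum : zetaSO s1 s2 s3 s4 = ∑' p : ℕ+ × ℕ+, soSummand s1 s2 s3 s4 p.1 p.2 := by
    rw [hsummable.tsum_prod]; rfl
  exact htsum ▸ hsummable.hasSum

end Convergence

theorem stmt7_general (s1 s2 s3 s4 : ℕ) (h2 : 0 < s2) (h3 : 0 < s3) (h : 1 < s1 + s3 + s4) :
    zetaSO s1 s2 s3 s4 =
      (∑ a2 ∈ Finset.range s2,
        (Nat.choose (s3 + a2 - 1) a2 : ℝ) * zetaSO s1 (s2 - a2) 0 (s4 + s3 + a2)) +
      ∑ a3 ∈ Finset.range s3,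
        (Nat.choose (s2 + a3 - 1) a3 : ℝ) * zetaSO s1 0 (s3 - a3) (s4 + s2 + a3) := by
  have hasSum_left : ∀ a2 ∈ Finset.range s2, HasSum
      (fun p : ℕ+ × ℕ+ =>
        (Nat.choose (s3 + a2 - 1) a2 : ℝ) * soSummand s1 (s2 - a2) 0 (s4 + s3 + a2) p.1 p.2)
      ((Nat.choose (s3 + a2 - 1) a2 : ℝ) * zetaSO s1 (s2 - a2) 0 (s4 + s3 + a2)) :=
    fun _ _ => (hasSum_zetaSO (by lia) (by lia) (by lia)).mul_left _
  have hasSum_right : ∀ a3 ∈ Finset.range s3, HasSum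
      (fun p : ℕ+ × ℕ+ =>
        (Nat.choose (s2 + a3 - 1) a3 : ℝ) * soSummand s1 0 (s3 - a3) (s4 + s2 + a3) p.1 p.2)
      ((Nat.choose (s2 + a3 - 1) a3 : ℝ) * zetaSO s1 0 (s3 - a3) (s4 + s2 + a3)) :=
    fun _ _ => (hasSum_zetaSO (by lia) (by lia) (by lia)).mul_left _
  refine (hasSum_zetaSO (by lia) (by lia) (by lia)).unique
    (((hasSum_sum hasSum_left).add (hasSum_sum hasSum_right)).congr_fun fun p => ?_)
  exact soSummand_eq_sum_add_sum s1 s4 h2 h3 (by positivity) (by positivity) (by positivity)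

theorem stmt7 (s1 s2 s3 s4 : ℕ) (h2 : 0 < s2) (h3 : 0 < s3) (h4 : 0 < s4) :
    zetaSO s1 s2 s3 s4 =
      (∑ a2 ∈ Finset.range s2,
        (Nat.choose (s3 + a2 - 1) a2 : ℝ) * zetaSO s1 (s2 - a2) 0 (s4 + s3 + a2)) +
      ∑ a3 ∈ Finset.range s3,
        (Nat.choose (s2 + a3 - 1) a3 : ℝ) * zetaSO s1 0 (s3 - a3) (s4 + s2 + a3) :=
  stmt7_general s1 s2 s3 s4 h2 h3 (by lia)
end

section
/- Let s1 and s4 be positive integers and s3 a nonnegative integer with s3+s4 > 1. Then ζ_so(s1,0,s3,s4) = ∑_{a1=0}^{s1−1} C(s4+a1−1, a1) · 2^{−(s4+a1)} · ζ(s3+s4+a1, s1−a1) + ∑_{a4=0}^{s4−1} C(s1+a4−1, a4) · 2^{−(s1+a4)} · ζ_so(0, 0, s3+s1+a4, s4−a4), where C(n,k) denotes the binomial coefficient and ζ(a,b) = ∑_{m>n≥1} 1/(m^a n^b) is the double zeta value. -/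
/-- Depth-two alternating Euler sum `ζ(s1,s2; x1,x2)`, summing over `m1 = n + k > m2 = n ≥ 1`.
The double zeta value `ζ(a,b)` is `es2 a b 1 1`. -/
noncomputable def es2 (s1 s2 : ℕ) (x1 x2 : ℝ) : ℝ :=
  ∑' (n : ℕ+) (k : ℕ+),
    x1 ^ ((n : ℕ) + (k : ℕ)) * x2 ^ (n : ℕ) / (((n : ℝ) + (k : ℝ)) ^ s1 * (n : ℝ) ^ s2)

/-!
With `w = 1 / (2 (m + n))`, the reciprocals `u = 1 / m` and `v = 1 / (m + 2 n)` satisfy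
`u v = w (u + v)`, because `m + (m + 2 n) = 2 (m + n)`. Iterating this relation writes
`u ^ s1 * v ^ s4` as a linear combination of products of a power of `w` with a power of only one of
`u` and `v`. Multiplying by the remaining factors and summing over `m` and `n` gives the recursion,
for any `s2`; absolute convergence of the double series justifies the rearrangement.
-/

section PartialFractions

variable {R : Type*} [CommSemiring R]

/-- The part of the partial fraction decomposition of `u ^ p * v ^ q` that involves only `u`, when
`u * v = w * (u + v)`. For `q = 0` the truncated `q + a - 1` makes the binomial coefficient vanish
unless `a = 0`, so that the sum is `u ^ p` if `0 < p`. -/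
def partialFractionSum (w u : R) (p q : ℕ) : R :=
  ∑ a ∈ Finset.range p, (Nat.choose (q + a - 1) a : R) * w ^ (q + a) * u ^ (p - a)

theorem partialFractionSum_zero_left (w u : R) (q : ℕ) : partialFractionSum w u 0 q = 0 :=
  Finset.sum_range_zero _

theorem partialFractionSum_succ_zero (w u : R) (p : ℕ) :
    partialFractionSum w u (p + 1) 0 = u ^ (p + 1) := by
  simp [partialFractionSum, Finset.sum_range_succ']

theorem partialFractionSum_succ_succ (w u : R) (p q : ℕ) :
    partialFractionSum w u (p + 1) (q + 1) =
      w * (partialFractionSum w u p (q + 1) + partialFractionSum w u (p + 1) q) := by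
  have pascal (a : ℕ) : Nat.choose (q + 1 + (a + 1) - 1) (a + 1) =
      Nat.choose (q + 1 + a - 1) a + Nat.choose (q + (a + 1) - 1) (a + 1) := by
    rw [show q + 1 + (a + 1) - 1 = q + a + 1 by omega, show q + 1 + a - 1 = q + a by omega,
      show q + (a + 1) - 1 = q + a by omega, Nat.choose_succ_succ]
  simp only [partialFractionSum, Finset.sum_range_succ' _ p, pascal, Nat.add_sub_add_right]
  rw [← add_assoc, ← Finset.sum_add_distrib, mul_add, Finset.mul_sum]
  congr 1
  · refine Finset.sum_congr rfl fun a _ => ?_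
    push_cast
    ring
  · simp only [add_zero, Nat.choose_zero_right]
    ring

theorem pow_mul_pow_eq_partialFractionSum_add {w u v : R} (huv : u * v = w * (u + v)) :
    ∀ {p q : ℕ}, 0 < p + q →
      u ^ p * v ^ q = partialFractionSum w u p q + partialFractionSum w v q p
  | 0, q + 1, _ => by simp [partialFractionSum_zero_left, partialFractionSum_succ_zero]
  | p + 1, 0, _ => by simp [partialFractionSum_zero_left, partialFractionSum_succ_zero]
  | p + 1, q + 1, _ => by
    have ih_left := pow_mul_pow_eq_partialFractionSum_add huv (p := p) (q := q + 1) (by omega)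
    have ih_right := pow_mul_pow_eq_partialFractionSum_add huv (p := p + 1) (q := q) (by omega)
    calc u ^ (p + 1) * v ^ (q + 1) = u ^ p * v ^ q * (u * v) := by ring
      _ = w * (u ^ p * v ^ (q + 1) + u ^ (p + 1) * v ^ q) := by rw [huv]; ring
      _ = partialFractionSum w u (p + 1) (q + 1) + partialFractionSum w v (q + 1) (p + 1) := by
        rw [ih_left, ih_right, partialFractionSum_succ_succ, partialFractionSum_succ_succ]
        ring

end PartialFractions

/-- The summand of `zetaSO s1 s2 s3 s4`, as a function of the pair `(m, n)`, so that the iterated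
series can be handled as an unordered sum over `ℕ+ × ℕ+`. -/
noncomputable def zetaSOSummand (s1 s2 s3 s4 : ℕ) (p : ℕ+ × ℕ+) : ℝ :=
  1 / ((p.1 : ℝ) ^ s1 * (p.2 : ℝ) ^ s2 * ((p.1 : ℝ) + (p.2 : ℝ)) ^ s3 *
    ((p.1 : ℝ) + 2 * (p.2 : ℝ)) ^ s4)

theorem zetaSOSummand_eq_sum_add_sum {s1 s4 : ℕ} (h14 : 0 < s1 + s4) (s2 s3 : ℕ) (p : ℕ+ × ℕ+) :
    zetaSOSummand s1 s2 s3 s4 p =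
      (∑ a1 ∈ Finset.range s1, (Nat.choose (s4 + a1 - 1) a1 : ℝ) * 2 ^ (-((s4 : ℤ) + a1)) *
          zetaSOSummand (s1 - a1) s2 (s3 + s4 + a1) 0 p) +
      ∑ a4 ∈ Finset.range s4, (Nat.choose (s1 + a4 - 1) a4 : ℝ) * 2 ^ (-((s1 : ℤ) + a4)) *
          zetaSOSummand 0 s2 (s3 + s1 + a4) (s4 - a4) p := by
  obtain ⟨m, n⟩ := p
  have reciprocal_relation : (m : ℝ)⁻¹ * ((m : ℝ) + 2 * n)⁻¹ =
      (2 * ((m : ℝ) + n))⁻¹ * ((m : ℝ)⁻¹ + ((m : ℝ) + 2 * n)⁻¹) := by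
    field_simp
    ring
  have two_zpow_neg (k j : ℕ) : (2 : ℝ) ^ (-((k : ℤ) + j)) = (2 ^ (k + j))⁻¹ := by
    rw [zpow_neg, ← Nat.cast_add, zpow_natCast]
  calc zetaSOSummand s1 s2 s3 s4 (m, n)
      = ((n : ℝ) ^ s2 * ((m : ℝ) + n) ^ s3)⁻¹ *
          ((m : ℝ)⁻¹ ^ s1 * ((m : ℝ) + 2 * n)⁻¹ ^ s4) := by
        simp only [zetaSOSummand, one_div, mul_inv, inv_pow]
        ring
    _ = _ := by
        rw [pow_mul_pow_eq_partialFractionSum_add reciprocal_relation h14, mul_add]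
        simp only [partialFractionSum, Finset.mul_sum]
        congr 1 <;>
        · refine Finset.sum_congr rfl fun a _ => ?_
          simp only [zetaSOSummand, two_zpow_neg, one_div, mul_inv, inv_pow, mul_pow, pow_add,
            pow_zero]
          ring

section Convergence

variable {s1 s2 s3 s4 : ℕ}

theorem rpow_mul_rpow_le_pow_mul_pow_mul_add_pow {a b c : ℕ} (hac : 2 ≤ a + c) (hbc : 2 ≤ b + c)
    (habc : 3 ≤ a + b + c) {x y : ℝ} (hx : 1 ≤ x) (hy : 1 ≤ y) :
    x ^ (3 / 2 : ℝ) * y ^ (3 / 2 : ℝ) ≤ x ^ a * y ^ b * (x + y) ^ c := by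
  have hx0 : 0 < x := by linarith
  have hy0 : 0 < y := by linarith
  have hac' : (2 : ℝ) ≤ a + c := by exact_mod_cast hac
  have hbc' : (2 : ℝ) ≤ b + c := by exact_mod_cast hbc
  have habc' : (3 : ℝ) ≤ a + b + c := by exact_mod_cast habc
  -- Of the `c` factors `x + y`, spend `t` on `x` and `c - t` on `y`.
  obtain ⟨t, ht0, htc, hat, hbt⟩ :
      ∃ t : ℝ, 0 ≤ t ∧ 0 ≤ c - t ∧ 3 / 2 ≤ a + t ∧ 3 / 2 ≤ b + (c - t) := by
    rcases le_total (3 / 2 : ℝ) a with ha | ha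
    · exact ⟨0, le_rfl, by simp, by linarith, by linarith⟩
    · exact ⟨3 / 2 - a, by linarith, by linarith, by linarith, by linarith⟩
  calc x ^ (3 / 2 : ℝ) * y ^ (3 / 2 : ℝ)
      ≤ x ^ (a + t) * y ^ (b + (c - t)) := by gcongr
    _ = x ^ a * y ^ b * (x ^ t * y ^ (c - t)) := by
        rw [Real.rpow_add hx0, Real.rpow_add hy0, Real.rpow_natCast, Real.rpow_natCast]
        ring
    _ ≤ x ^ a * y ^ b * ((x + y) ^ t * (x + y) ^ (c - t)) := by gcongr <;> linarith
    _ = x ^ a * y ^ b * (x + y) ^ c := by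
        rw [← Real.rpow_add (by positivity), add_sub_cancel, Real.rpow_natCast]

theorem summable_zetaSOSummand (h134 : 2 ≤ s1 + s3 + s4) (h234 : 2 ≤ s2 + s3 + s4)
    (h1234 : 3 ≤ s1 + s2 + s3 + s4) : Summable (zetaSOSummand s1 s2 s3 s4) := by
  have summable_single : Summable fun n : ℕ+ => 1 / (n : ℝ) ^ (3 / 2 : ℝ) :=
    (Real.summable_one_div_nat_rpow.2 (by norm_num)).comp_injective PNat.coe_injective
  have summable_product := summable_single.mul_of_nonneg summable_single
    (fun n => by positivity) (fun n => by positivity)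
  refine summable_product.of_nonneg_of_le (fun p => by unfold zetaSOSummand; positivity) ?_
  rintro ⟨m, n⟩
  have hm : (1 : ℝ) ≤ m := by exact_mod_cast m.pos
  have hn : (1 : ℝ) ≤ n := by exact_mod_cast n.pos
  rw [zetaSOSummand, one_div_mul_one_div]
  refine one_div_le_one_div_of_le (by positivity) ?_
  calc (m : ℝ) ^ (3 / 2 : ℝ) * (n : ℝ) ^ (3 / 2 : ℝ)
      ≤ (m : ℝ) ^ s1 * (n : ℝ) ^ s2 * ((m : ℝ) + n) ^ (s3 + s4) :=
        rpow_mul_rpow_le_pow_mul_pow_mul_add_pow (by omega) (by omega) (by omega) hm hn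
    _ = (m : ℝ) ^ s1 * (n : ℝ) ^ s2 * ((m : ℝ) + n) ^ s3 * ((m : ℝ) + n) ^ s4 := by
        rw [pow_add, mul_assoc _ (_ ^ s3)]
    _ ≤ (m : ℝ) ^ s1 * (n : ℝ) ^ s2 * ((m : ℝ) + n) ^ s3 * ((m : ℝ) + 2 * n) ^ s4 := by
        gcongr
        linarith

theorem hasSum_zetaSOSummand (h134 : 2 ≤ s1 + s3 + s4) (h234 : 2 ≤ s2 + s3 + s4)
    (h1234 : 3 ≤ s1 + s2 + s3 + s4) :
    HasSum (zetaSOSummand s1 s2 s3 s4) (zetaSO s1 s2 s3 s4) := by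
  have summable := summable_zetaSOSummand h134 h234 h1234
  have tsum_eq : ∑' p, zetaSOSummand s1 s2 s3 s4 p = zetaSO s1 s2 s3 s4 := summable.tsum_prod
  exact tsum_eq ▸ summable.hasSum

end Convergence

theorem es2_one_one (a b : ℕ) : es2 a b 1 1 = zetaSO b 0 a 0 := by
  simp [es2, zetaSO, mul_comm]

theorem stmt9_general (s1 s2 s3 s4 : ℕ) (h14 : 0 < s1 + s4) (h134 : 2 ≤ s1 + s3 + s4)
    (h234 : 2 ≤ s2 + s3 + s4) (h1234 : 3 ≤ s1 + s2 + s3 + s4) :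
    zetaSO s1 s2 s3 s4 =
      (∑ a1 ∈ Finset.range s1,
        (Nat.choose (s4 + a1 - 1) a1 : ℝ) * 2 ^ (-((s4 : ℤ) + a1)) *
          zetaSO (s1 - a1) s2 (s3 + s4 + a1) 0) +
      ∑ a4 ∈ Finset.range s4,
        (Nat.choose (s1 + a4 - 1) a4 : ℝ) * 2 ^ (-((s1 : ℤ) + a4)) *
          zetaSO 0 s2 (s3 + s1 + a4) (s4 - a4) := by
  refine (hasSum_zetaSOSummand h134 h234 h1234).unique ?_
  simp only [funext (zetaSOSummand_eq_sum_add_sum h14 s2 s3)]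
  refine (hasSum_sum fun a1 ha1 => ?_).add (hasSum_sum fun a4 ha4 => ?_)
  · rw [Finset.mem_range] at ha1
    exact (hasSum_zetaSOSummand (by omega) (by omega) (by omega)).mul_left _
  · rw [Finset.mem_range] at ha4
    exact (hasSum_zetaSOSummand (by omega) (by omega) (by omega)).mul_left _

theorem stmt9 (s1 s3 s4 : ℕ) (h1 : 0 < s1) (h4 : 0 < s4) (h34 : 1 < s3 + s4) :
    zetaSO s1 0 s3 s4 =
      (∑ a1 ∈ Finset.range s1,
        (Nat.choose (s4 + a1 - 1) a1 : ℝ) * 2 ^ (-((s4 : ℤ) + a1)) *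
          es2 (s3 + s4 + a1) (s1 - a1) 1 1) +
      ∑ a4 ∈ Finset.range s4,
        (Nat.choose (s1 + a4 - 1) a4 : ℝ) * 2 ^ (-((s1 : ℤ) + a4)) *
          zetaSO 0 0 (s3 + s1 + a4) (s4 - a4) := by
  simp only [es2_one_one]
  exact stmt9_general s1 0 s3 s4 (by omega) (by omega) (by omega) (by omega)
end

section
/- For all integers u ≥ 1 and v ≥ 2, ∑_{m,n=1}^∞ 1/(n^u (m+2n)^v) = 2^{u−1} · ( ζ(v,u; 1,1) + ζ(v,u; 1,−1) ). -/
/-!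
Adding the two Euler sums weights the terms with `m₂ = n` by `1 + (-1) ^ n`, which keeps exactly the
even `n`, with weight `2`. Writing these as `2 * n` and `m₁` as `2 * n + m` gives the left-hand
double series up to the factor `2 ^ u` from `(2 * n) ^ u`. Both sides are iterated sums in opposite
orders; they agree because the double series converges absolutely.
-/

/-- The tail `∑_{m > n} 1 / m ^ s` of the zeta series, with `m = n + k`. It is the inner sum of the
depth-two Euler sums whose first sign is `1`. -/
noncomputable def zetaTail (s : ℕ) (n : ℕ+) : ℝ :=
  ∑' k : ℕ+, 1 / ((n : ℝ) + k) ^ s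

theorem es2_one_left (s₁ s₂ : ℕ) (x : ℝ) :
    es2 s₁ s₂ 1 x = ∑' n : ℕ+, x ^ (n : ℕ) * (zetaTail s₁ n / (n : ℝ) ^ s₂) := by
  simp only [es2, zetaTail, ← tsum_div_const, ← tsum_mul_left, one_pow, one_mul]
  exact tsum_congr fun n => tsum_congr fun k => by ring

section Parity

variable {R : Type*} [Ring R] [TopologicalSpace R] [IsTopologicalRing R] {f : ℕ+ → R} {a b : R}

theorem mem_range_two_mul_of_even {n : ℕ+} (hn : Even (n : ℕ)) :
    n ∈ Set.range fun k : ℕ+ => 2 * k := by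
  obtain ⟨k, hk⟩ := even_iff_two_dvd.mp hn
  exact ⟨⟨k, by have := n.pos; omega⟩, PNat.eq hk.symm⟩

theorem hasSum_one_add_neg_one_pow_mul (heven : HasSum (fun n => f (2 * n)) b) :
    HasSum (fun n : ℕ+ => (1 + (-1) ^ (n : ℕ)) * f n) (2 * b) := by
  have h_odd : ∀ n ∉ Set.range (fun k : ℕ+ => 2 * k), (1 + (-1) ^ (n : ℕ)) * f n = 0 := by
    intro n hn
    have hodd : Odd (n : ℕ) := Nat.not_even_iff_odd.mp (mt mem_range_two_mul_of_even hn)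
    rw [hodd.neg_one_pow, add_neg_cancel, zero_mul]
  have h_even (n : ℕ+) : (1 + (-1) ^ ((2 * n : ℕ+) : ℕ)) * f (2 * n) = 2 * f (2 * n) := by
    have : Even ((2 * n : ℕ+) : ℕ) := by simp
    rw [this.neg_one_pow, one_add_one_eq_two]
  rw [← (mul_right_injective (2 : ℕ+)).hasSum_iff h_odd]
  simpa only [Function.comp_def, h_even] using heven.mul_left 2

theorem hasSum_neg_one_pow_mul (hf : HasSum f a) (heven : HasSum (fun n => f (2 * n)) b) :
    HasSum (fun n : ℕ+ => (-1) ^ (n : ℕ) * f n) (2 * b - a) := by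
  simpa only [add_mul, one_mul, add_sub_cancel_left] using
    (hasSum_one_add_neg_one_pow_mul heven).sub hf

end Parity

theorem rpow_mul_rpow_le_add_pow_mul_pow {u v : ℕ} {a b : ℝ} (hv : 2 ≤ v) (huv : 3 ≤ u + v)
    (ha : 1 ≤ a) (hb : 0 ≤ b) :
    a ^ (3 / 2 : ℝ) * b ^ (3 / 2 : ℝ) ≤ (a + b) ^ v * a ^ u := by
  obtain ⟨w, rfl⟩ := Nat.exists_eq_add_of_le hv
  have ha_pos : 0 < a := by linarith
  have ha_split : a ^ (3 / 2 : ℝ) = a ^ (1 / 2 : ℝ) * a := by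
    rw [← Real.rpow_add_one ha_pos.ne']; norm_num
  have hab_split : (a + b) ^ (1 / 2 : ℝ) * (a + b) ^ (3 / 2 : ℝ) = (a + b) ^ 2 := by
    rw [← Real.rpow_add (by linarith), ← Real.rpow_natCast]; norm_num
  have ha_le : a ≤ (a + b) ^ w * a ^ u := calc
    a ≤ a ^ (w + u) := le_self_pow₀ ha (by omega)
    _ = a ^ w * a ^ u := pow_add a w u
    _ ≤ (a + b) ^ w * a ^ u := by gcongr; linarith
  calc a ^ (3 / 2 : ℝ) * b ^ (3 / 2 : ℝ)
      = a ^ (1 / 2 : ℝ) * b ^ (3 / 2 : ℝ) * a := by rw [ha_split]; ring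
    _ ≤ (a + b) ^ (1 / 2 : ℝ) * (a + b) ^ (3 / 2 : ℝ) * a := by gcongr <;> linarith
    _ = (a + b) ^ 2 * a := by rw [hab_split]
    _ ≤ (a + b) ^ 2 * ((a + b) ^ w * a ^ u) := by gcongr
    _ = (a + b) ^ (2 + w) * a ^ u := by ring

section DoubleSeries

variable {u v : ℕ}

theorem summable_one_div_add_pow_mul_pow (hv : 2 ≤ v) (huv : 3 ≤ u + v) :
    Summable fun p : ℕ+ × ℕ+ => 1 / (((p.1 : ℝ) + p.2) ^ v * (p.1 : ℝ) ^ u) := by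
  have h_rpow : Summable fun n : ℕ+ => 1 / (n : ℝ) ^ (3 / 2 : ℝ) :=
    (Real.summable_one_div_nat_rpow.mpr (by norm_num)).comp_injective PNat.coe_injective
  refine .of_nonneg_of_le (fun p => by positivity) (fun p => ?_)
    (h_rpow.mul_of_nonneg h_rpow (fun n => by positivity) (fun n => by positivity))
  have h_fst : (1 : ℝ) ≤ p.1 := mod_cast (one_le : 1 ≤ p.1)
  rw [one_div_mul_one_div]
  exact one_div_le_one_div_of_le (by positivity)
    (rpow_mul_rpow_le_add_pow_mul_pow hv huv h_fst (by positivity))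

theorem summable_zetaTail_div_pow (hv : 2 ≤ v) (huv : 3 ≤ u + v) :
    Summable fun n : ℕ+ => zetaTail v n / (n : ℝ) ^ u := by
  simpa only [zetaTail, ← tsum_div_const, div_div] using
    (summable_one_div_add_pow_mul_pow hv huv).prod

theorem es2_one_one_add_es2_one_neg_one (hv : 2 ≤ v) (huv : 3 ≤ u + v) :
    es2 v u 1 1 + es2 v u 1 (-1) =
      2 * ∑' n : ℕ+, zetaTail v (2 * n) / ((2 * n : ℕ+) : ℝ) ^ u := by
  have h_all := summable_zetaTail_div_pow hv huv
  have h_even := h_all.comp_injective (mul_right_injective (2 : ℕ+))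
  rw [es2_one_left, es2_one_left, (hasSum_neg_one_pow_mul h_all.hasSum h_even.hasSum).tsum_eq]
  simp only [one_pow, one_mul, add_sub_cancel, Function.comp_apply]

theorem tsum_one_div_pow_mul_add_two_mul_pow (hv : 2 ≤ v) (huv : 3 ≤ u + v) :
    ∑' (m : ℕ+) (n : ℕ+), 1 / ((n : ℝ) ^ u * ((m : ℝ) + 2 * n) ^ v) =
      2 ^ u * ∑' n : ℕ+, zetaTail v (2 * n) / ((2 * n : ℕ+) : ℝ) ^ u := by
  have h_term (m n : ℕ+) : 1 / ((n : ℝ) ^ u * ((m : ℝ) + 2 * n) ^ v) =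
      2 ^ u * (1 / ((((2 * n : ℕ+) : ℝ) + m) ^ v * ((2 * n : ℕ+) : ℝ) ^ u)) := by
    simp only [PNat.mul_coe, PNat.val_ofNat, Nat.cast_mul, Nat.cast_ofNat]
    field_simp
    ring
  have h_summable : Summable fun p : ℕ+ × ℕ+ =>
      1 / ((((2 * p.1 : ℕ+) : ℝ) + p.2) ^ v * ((2 * p.1 : ℕ+) : ℝ) ^ u) :=
    (summable_one_div_add_pow_mul_pow hv huv).comp_injective (i := Prod.map (2 * ·) id)
      ((mul_right_injective (2 : ℕ+)).prodMap Function.injective_id)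
  simp only [h_term, tsum_mul_left]
  rw [Summable.tsum_comm (f := fun n m : ℕ+ =>
    1 / ((((2 * n : ℕ+) : ℝ) + m) ^ v * ((2 * n : ℕ+) : ℝ) ^ u)) h_summable]
  simp only [zetaTail, ← tsum_div_const, div_div]

end DoubleSeries

theorem stmt10 (u v : ℕ) (hu : 1 ≤ u) (hv : 2 ≤ v) :
    (∑' (m : ℕ+) (n : ℕ+), 1 / ((n : ℝ) ^ u * ((m : ℝ) + 2 * (n : ℝ)) ^ v)) =
      2 ^ (u - 1) * (es2 v u 1 1 + es2 v u 1 (-1)) := by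
  have huv : 3 ≤ u + v := by omega
  rw [tsum_one_div_pow_mul_add_two_mul_pow hv huv, es2_one_one_add_es2_one_neg_one hv huv,
    ← mul_assoc, pow_sub_one_mul (by omega)]
end

section
/- Let s ≥ 2 be an integer and for each positive integer N set S^(N) = ∑_{m=1}^N ∑_{n=1}^N ( 1/(n^s (m+2n)) − 1/(n^s (m+n)) ). Then lim_{N→∞} S^(N) = (1 − 2^{s−1}) · ( ζ(s+1) + ζ(s,1;1,1) ) − 2^{s−1} · ( ζ(s,1;−1,1) + ζ(s+1;−1) ). -/
noncomputable def rzeta (s : ℕ) : ℝ := ∑' m : ℕ+, 1 / (m : ℝ) ^ s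

/-- Depth-one alternating Euler sum `ζ(s; x)`. -/
noncomputable def es1 (s : ℕ) (x : ℝ) : ℝ := ∑' m : ℕ+, x ^ (m : ℕ) / (m : ℝ) ^ s

/-!
Write `H n` for the harmonic numbers. Summing over `m` first,
`S^(N) = ∑_{n ≤ N} (H n - H (2n)) / n^s + ∑_{n ≤ N} (H (N + 2n) - H (N + n)) / n^s`.
The summands of the second sum are at most `1 / (N n)`, so it is `O(H N / N)` and vanishes in the
limit. For the first, grouping `ζ(s,1;x,1)` by its larger index gives
`∑ x^n H n / n^s = ζ(s+1;x) + ζ(s,1;x,1)`; averaging `x = 1` and `x = -1` isolates the even indices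
and hence evaluates `∑ H (2n) / n^s`.
-/

open Filter Finset Topology

lemma tendsto_sum_Icc_one_of_hasSum {M : Type*} [AddCommMonoid M] [TopologicalSpace M]
    {f : ℕ → M} {a : M} (hf : HasSum f a) (hf₀ : f 0 = 0) :
    Tendsto (fun N ↦ ∑ n ∈ Icc 1 N, f n) atTop (𝓝 a) := by
  refine (hf.tendsto_sum_nat.comp (tendsto_add_atTop_nat 1)).congr fun N ↦ ?_
  rw [Function.comp_apply, sum_range_eq_add_Ico f N.succ_pos, hf₀, zero_add]
  rfl

lemma hasSum_two_mul_of_hasSum_neg_one_pow_mul {K : Type*} [DivisionRing K] [NeZero (2 : K)]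
    [TopologicalSpace K] [IsTopologicalRing K] {f : ℕ → K} {a b : K} (hf : HasSum f a)
    (hf' : HasSum (fun n ↦ (-1) ^ n * f n) b) :
    HasSum (fun n ↦ f (2 * n)) ((a + b) / 2) := by
  have vanish_odd : ∀ n ∉ Set.range (2 * · : ℕ → ℕ), (f n + (-1) ^ n * f n) / 2 = 0 := by
    intro n hn
    have hn_odd : Odd n := by
      rw [← Nat.not_even_iff_odd, even_iff_exists_two_mul]
      exact fun ⟨k, hk⟩ ↦ hn ⟨k, hk.symm⟩
    simp [hn_odd.neg_one_pow]
  have hasSum_even := ((mul_right_injective₀ two_ne_zero).hasSum_iff vanish_odd).2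
    ((hf.add hf').div_const 2)
  simpa [Function.comp_def] using hasSum_even

lemma harmonic_mono : Monotone harmonic :=
  monotone_nat_of_le_succ fun n ↦ by
    rw [harmonic_succ]
    exact le_add_of_nonneg_right (by positivity)

lemma harmonic_add_sub_harmonic (N a : ℕ) :
    (harmonic (N + a) : ℝ) - harmonic a = ∑ m ∈ Icc 1 N, ((m : ℝ) + a)⁻¹ := by
  induction N with
  | zero => simp
  | succ N ih =>
    rw [sum_Icc_succ_top N.succ_pos, ← ih, Nat.add_right_comm, harmonic_succ]
    push_cast
    ring

lemma harmonic_add_sub_harmonic_le (N a : ℕ) :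
    (harmonic (N + a) : ℝ) - harmonic a ≤ N / (a + 1) := by
  have term_le : ∀ m ∈ Icc 1 N, ((m : ℝ) + a)⁻¹ ≤ ((a : ℝ) + 1)⁻¹ := by
    intro m hm
    have : (1 : ℝ) ≤ m := mod_cast (mem_Icc.1 hm).1
    gcongr ?_⁻¹
    linarith
  simpa [harmonic_add_sub_harmonic, div_eq_mul_inv] using sum_le_card_nsmul _ _ _ term_le

lemma sum_Icc_one_div_mul_add (N a : ℕ) (c : ℝ) :
    ∑ m ∈ Icc 1 N, 1 / (c * ((m : ℝ) + a)) = (harmonic (N + a) - harmonic a) / c := by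
  rw [harmonic_add_sub_harmonic, sum_div]
  refine sum_congr rfl fun m _ ↦ ?_
  rw [one_div, mul_inv_rev, div_eq_mul_inv]

lemma sum_Ico_one_inv_add_inv (m : ℕ) :
    ∑ n ∈ Ico 1 m, (n : ℝ)⁻¹ + (m : ℝ)⁻¹ = harmonic m := by
  cases m with
  | zero => simp
  | succ m =>
    rw [harmonic_succ, harmonic_eq_sum_Icc]
    push_cast
    rfl

lemma tendsto_inv_mul_harmonic : Tendsto (fun N : ℕ ↦ (N : ℝ)⁻¹ * harmonic N) atTop (𝓝 0) := by
  refine (tendsto_one_div_add_atTop_nhds_zero_nat (𝕜 := ℝ)).cesaro.congr fun N ↦ ?_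
  simp [harmonic]

lemma rzeta_eq_es1_one (s : ℕ) : rzeta s = es1 s 1 := by
  simp [rzeta, es1]

lemma hasSum_es1 {s : ℕ} (hs : 1 < s) {x : ℝ} (hx : |x| ≤ 1) :
    HasSum (fun m : ℕ ↦ x ^ m / (m : ℝ) ^ s) (es1 s x) := by
  have summable : Summable fun m : ℕ ↦ x ^ m / (m : ℝ) ^ s := by
    refine (Real.summable_one_div_nat_pow.2 hs).of_norm_bounded fun m ↦ ?_
    simp only [norm_div, norm_pow, Real.norm_eq_abs, Nat.abs_cast]
    gcongr
    exact pow_le_one₀ (abs_nonneg x) hx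
  have zero_term : x ^ 0 / ((0 : ℕ) : ℝ) ^ s = 0 := by simp [show s ≠ 0 by omega]
  rw [es1, tsum_pnat_eq_tsum_of_eq_zero (f := fun m : ℕ ↦ x ^ m / (m : ℝ) ^ s) zero_term]
  exact summable.hasSum

-- Both exponents on the left exceed `1`, so depth-two Euler sums are dominated by a product of
-- two convergent series.
lemma rpow_three_halves_mul_le {a b : ℝ} (ha : 0 < a) (hb : 0 ≤ b) :
    a ^ (3 / 2 : ℝ) * b ^ (3 / 2 : ℝ) ≤ (a + b) ^ 2 * a :=
  calc a ^ (3 / 2 : ℝ) * b ^ (3 / 2 : ℝ)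
      = a ^ (1 / 2 : ℝ) * b ^ (3 / 2 : ℝ) * a := by
        rw [show (3 / 2 : ℝ) = 1 / 2 + 1 by norm_num, Real.rpow_add_one ha.ne']
        ring
    _ ≤ (a + b) ^ (1 / 2 : ℝ) * (a + b) ^ (3 / 2 : ℝ) * a := by gcongr <;> linarith
    _ = (a + b) ^ 2 * a := by
        rw [← Real.rpow_add (by linarith)]
        norm_num

section DepthTwo

variable {s₁ s₂ : ℕ} {x₁ x₂ : ℝ}

lemma summable_es2 (hs₁ : 2 ≤ s₁) (hs₂ : 1 ≤ s₂) (hx₁ : |x₁| ≤ 1) (hx₂ : |x₂| ≤ 1) :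
    Summable fun p : ℕ+ × ℕ+ ↦ x₁ ^ ((p.1 : ℕ) + (p.2 : ℕ)) * x₂ ^ (p.1 : ℕ) /
      (((p.1 : ℝ) + (p.2 : ℝ)) ^ s₁ * (p.1 : ℝ) ^ s₂) := by
  have summable_rpow : Summable fun n : ℕ+ ↦ 1 / (n : ℝ) ^ (3 / 2 : ℝ) :=
    (Real.summable_one_div_nat_rpow.2 (by norm_num)).comp_injective PNat.coe_injective
  refine (summable_rpow.mul_of_nonneg summable_rpow (fun _ ↦ by positivity)
    (fun _ ↦ by positivity)).of_norm_bounded fun ⟨n, k⟩ ↦ ?_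
  have hn : (1 : ℝ) ≤ n := mod_cast n.pos
  have hk : (1 : ℝ) ≤ k := mod_cast k.pos
  have num_le : |x₁ ^ ((n : ℕ) + (k : ℕ)) * x₂ ^ (n : ℕ)| ≤ 1 := by
    rw [abs_mul, abs_pow, abs_pow]
    exact mul_le_one₀ (pow_le_one₀ (abs_nonneg _) hx₁) (by positivity)
      (pow_le_one₀ (abs_nonneg _) hx₂)
  have le_den : (n : ℝ) ^ (3 / 2 : ℝ) * (k : ℝ) ^ (3 / 2 : ℝ) ≤
      ((n : ℝ) + k) ^ s₁ * (n : ℝ) ^ s₂ :=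
    calc (n : ℝ) ^ (3 / 2 : ℝ) * (k : ℝ) ^ (3 / 2 : ℝ)
        ≤ ((n : ℝ) + k) ^ 2 * n := rpow_three_halves_mul_le (by positivity) (by positivity)
      _ ≤ ((n : ℝ) + k) ^ s₁ * (n : ℝ) ^ s₂ := by
          gcongr
          · linarith
          · exact le_self_pow₀ hn (by omega)
  rw [Real.norm_eq_abs, abs_div, div_mul_div_comm, one_mul,
    abs_of_nonneg (a := ((n : ℝ) + k) ^ s₁ * (n : ℝ) ^ s₂) (by positivity)]
  gcongr

/-- The index pairs `m > n ≥ 1` of a depth-two Euler sum, parametrised by `(n, m - n)` as in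
`es2`. -/
def sigmaIcoOneEquiv : (Σ m : ℕ, Ico 1 m) ≃ ℕ+ × ℕ+ where
  toFun p := (⟨p.2, (mem_Ico.1 p.2.2).1⟩, ⟨p.1 - p.2, Nat.sub_pos_of_lt (mem_Ico.1 p.2.2).2⟩)
  invFun q := ⟨q.1 + q.2, q.1, mem_Ico.2 ⟨q.1.pos, Nat.lt_add_of_pos_right q.2.pos⟩⟩
  left_inv := fun ⟨_, _, hn⟩ ↦
    Sigma.subtype_ext (Nat.add_sub_of_le (mem_Ico.1 hn).2.le) rfl
  right_inv := fun ⟨n, k⟩ ↦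
    Prod.ext rfl (PNat.eq (Nat.add_sub_cancel_left (n := (n : ℕ)) (m := k)))

lemma hasSum_es2 (hs₁ : 2 ≤ s₁) (hs₂ : 1 ≤ s₂) (hx₁ : |x₁| ≤ 1) (hx₂ : |x₂| ≤ 1) :
    HasSum (fun m : ℕ ↦ x₁ ^ m / (m : ℝ) ^ s₁ * ∑ n ∈ Ico 1 m, x₂ ^ n / (n : ℝ) ^ s₂)
      (es2 s₁ s₂ x₁ x₂) := by
  have summable := summable_es2 hs₁ hs₂ hx₁ hx₂
  have hasSum_pairs := sigmaIcoOneEquiv.hasSum_iff.2 summable.hasSum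
  rw [summable.tsum_prod] at hasSum_pairs
  refine (hasSum_pairs.sigma fun m ↦ hasSum_fintype _).congr_fun fun m ↦ ?_
  rw [mul_sum, ← sum_coe_sort]
  refine sum_congr rfl fun n _ ↦ ?_
  have hn : (n : ℕ) ≤ m := (mem_Ico.1 n.2).2.le
  simp [sigmaIcoOneEquiv, hn, div_mul_div_comm]

end DepthTwo

lemma hasSum_pow_mul_harmonic_div_pow {s : ℕ} (hs : 2 ≤ s) {x : ℝ} (hx : |x| ≤ 1) :
    HasSum (fun n : ℕ ↦ x ^ n * (harmonic n / (n : ℝ) ^ s)) (es1 (s + 1) x + es2 s 1 x 1) := by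
  convert (hasSum_es1 (s := s + 1) (by omega) hx).add
    (hasSum_es2 (x₂ := 1) hs le_rfl hx (by simp)) using 2 with n
  simp only [one_pow, pow_one, one_div, ← sum_Ico_one_inv_add_inv]
  ring

lemma hasSum_harmonic_div_pow {s : ℕ} (hs : 2 ≤ s) :
    HasSum (fun n : ℕ ↦ (harmonic n : ℝ) / (n : ℝ) ^ s) (rzeta (s + 1) + es2 s 1 1 1) := by
  simpa [rzeta_eq_es1_one] using hasSum_pow_mul_harmonic_div_pow hs (x := 1) (by simp)

lemma hasSum_harmonic_two_mul_div_pow {s : ℕ} (hs : 2 ≤ s) :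
    HasSum (fun n : ℕ ↦ (harmonic (2 * n) : ℝ) / (n : ℝ) ^ s)
      (2 ^ (s - 1) * (rzeta (s + 1) + es2 s 1 1 1 + (es1 (s + 1) (-1) + es2 s 1 (-1) 1))) := by
  have even_part := hasSum_two_mul_of_hasSum_neg_one_pow_mul (hasSum_harmonic_div_pow hs)
    (hasSum_pow_mul_harmonic_div_pow hs (x := -1) (by simp))
  have two_pow : (2 : ℝ) ^ (s - 1) = 2 ^ s / 2 :=
    eq_div_of_mul_eq two_ne_zero (pow_sub_one_mul (by omega) 2)
  rw [two_pow, div_mul_eq_mul_div, mul_div_assoc]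
  refine (even_part.mul_left (2 ^ s)).congr_fun fun n ↦ ?_
  push_cast
  rw [mul_pow]
  field_simp

lemma sum_sum_Icc_eq_sum_harmonic_add_sum_harmonic (s N : ℕ) :
    ∑ m ∈ Icc 1 N, ∑ n ∈ Icc 1 N,
        (1 / ((n : ℝ) ^ s * ((m : ℝ) + 2 * n)) - 1 / ((n : ℝ) ^ s * ((m : ℝ) + n))) =
      ∑ n ∈ Icc 1 N, ((harmonic n : ℝ) / (n : ℝ) ^ s - harmonic (2 * n) / (n : ℝ) ^ s) +
        ∑ n ∈ Icc 1 N, ((harmonic (N + 2 * n) : ℝ) - harmonic (N + n)) / (n : ℝ) ^ s := by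
  rw [sum_comm, ← sum_add_distrib]
  refine sum_congr rfl fun n _ ↦ ?_
  have sum_two_mul := sum_Icc_one_div_mul_add N (2 * n) ((n : ℝ) ^ s)
  push_cast at sum_two_mul
  rw [sum_sub_distrib, sum_two_mul, sum_Icc_one_div_mul_add]
  ring

lemma harmonic_sub_harmonic_div_pow_le {s : ℕ} (hs : 2 ≤ s) {N n : ℕ} (hn : n ∈ Icc 1 N) :
    ((harmonic (N + 2 * n) : ℝ) - harmonic (N + n)) / (n : ℝ) ^ s ≤ (N : ℝ)⁻¹ * (n : ℝ)⁻¹ := by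
  have hn₁ : (1 : ℝ) ≤ n := mod_cast (mem_Icc.1 hn).1
  have hnN : (n : ℝ) ≤ N := mod_cast (mem_Icc.1 hn).2
  have hN : (0 : ℝ) < N := by linarith
  have diff_le : (harmonic (N + 2 * n) : ℝ) - harmonic (N + n) ≤ n / N :=
    calc (harmonic (N + 2 * n) : ℝ) - harmonic (N + n)
        = harmonic (n + (N + n)) - harmonic (N + n) := by rw [show N + 2 * n = n + (N + n) by ring]
      _ ≤ n / ((N + n : ℕ) + 1) := harmonic_add_sub_harmonic_le n (N + n)
      _ ≤ n / N := by
          push_cast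
          gcongr
          linarith
  calc ((harmonic (N + 2 * n) : ℝ) - harmonic (N + n)) / (n : ℝ) ^ s
      ≤ n / N / (n : ℝ) ^ 2 := by gcongr
    _ = (N : ℝ)⁻¹ * (n : ℝ)⁻¹ := by field_simp

lemma tendsto_sum_harmonic_sub_harmonic_div_pow {s : ℕ} (hs : 2 ≤ s) :
    Tendsto (fun N : ℕ ↦ ∑ n ∈ Icc 1 N,
      ((harmonic (N + 2 * n) : ℝ) - harmonic (N + n)) / (n : ℝ) ^ s) atTop (𝓝 0) := by
  refine squeeze_zero (fun N ↦ sum_nonneg fun n _ ↦ ?_) (fun N ↦ ?_) tendsto_inv_mul_harmonic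
  · have : (harmonic (N + n) : ℝ) ≤ harmonic (N + 2 * n) :=
      mod_cast harmonic_mono (by omega)
    exact div_nonneg (sub_nonneg.2 this) (by positivity)
  · rw [harmonic_eq_sum_Icc]
    push_cast
    rw [mul_sum]
    exact sum_le_sum fun n hn ↦ harmonic_sub_harmonic_div_pow_le hs hn

theorem stmt11 (s : ℕ) (hs : 2 ≤ s) :
    Filter.Tendsto
      (fun N : ℕ => ∑ m ∈ Finset.Icc 1 N, ∑ n ∈ Finset.Icc 1 N,
        (1 / ((n : ℝ) ^ s * ((m : ℝ) + 2 * n)) - 1 / ((n : ℝ) ^ s * ((m : ℝ) + n))))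
      Filter.atTop
      (nhds ((1 - 2 ^ (s - 1)) * (rzeta (s + 1) + es2 s 1 1 1)
        - 2 ^ (s - 1) * (es2 s 1 (-1) 1 + es1 (s + 1) (-1)))) := by
  have tendsto_main := tendsto_sum_Icc_one_of_hasSum
    ((hasSum_harmonic_div_pow hs).sub (hasSum_harmonic_two_mul_div_pow hs)) (by simp)
  have tendsto_total := tendsto_main.add (tendsto_sum_harmonic_sub_harmonic_div_pow hs)
  simp only [sum_sum_Icc_eq_sum_harmonic_add_sum_harmonic]
  convert tendsto_total using 2
  ring
end

section
/- ζ_so(1,1,0,1) = (11/8)·ζ(3) and ζ_so(0,0,2,1) = (1/4)·ζ(3). -/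
/-!
Write `A` for the Tornheim sum of `1 / (x y (x + y))` over positive integers, and `A_oe`, `A_oo`
for its parts with `x` odd and `y` even, and with `x` and `y` odd. The partial fractions
`1 / (x y) = (1 / x + 1 / y) / (x + y)` and `1 / (x (x + y)) = (1 / x - 1 / (x + y)) / y` (the
second telescopes when summed over `x`) express such sums through double zeta values
`∑ 1 / (x z ^ 2)`. On all integers this gives Euler's `A = 2 ζ(3)`, and on residue classes mod 2 it
gives `A_oo = 2 A_oe`.

* Putting `x = m` and `y = 2 n`, `ζ_so(1,1,0,1)` is twice the part of `A` with `y` even, that is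
  `2 A_oe + A / 4`; and `A = A / 8 + 2 A_oe + A_oo = A / 8 + 4 A_oe`.
* Putting `z = m + n` and `y = n`, the identity
  `1 / (z ^ 2 (z + y)) = 1 / (y z ^ 2) - 1 / (y z (z + y))` writes `ζ_so(0,0,2,1)` as a difference
  of sums over `y < z`. The first is `A / 2`, and the second is `(A - ζ(3) / 2) / 2` because the
  diagonal `x = y` contributes `ζ(3) / 2` to `A`.
-/

open Filter Finset Topology

section DoubleSeries

variable {β E : Type*} [NormedAddCommGroup E] [CompleteSpace E]

theorem tsum_nat_prod_eq_zero_add {f : ℕ × β → E} (hf : Summable f) :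
    ∑' p, f p = ∑' b, f (0, b) + ∑' p : ℕ × β, f (p.1 + 1, p.2) := by
  have hsucc : Summable fun p : ℕ × β => f (p.1 + 1, p.2) :=
    hf.comp_injective fun p q hpq => by grind
  rw [hf.tsum_prod, hf.prod.tsum_eq_zero_add, hsucc.tsum_prod]

theorem tsum_nat_prod_eq_even_add_odd {f : ℕ × β → E} (hf : Summable f) :
    ∑' p, f p = ∑' p : ℕ × β, f (2 * p.1, p.2) + ∑' p : ℕ × β, f (2 * p.1 + 1, p.2) := by
  have heven : Summable fun p : ℕ × β => f (2 * p.1, p.2) :=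
    hf.comp_injective fun p q hpq => by grind
  have hodd : Summable fun p : ℕ × β => f (2 * p.1 + 1, p.2) :=
    hf.comp_injective fun p q hpq => by grind
  rw [hf.tsum_prod, heven.tsum_prod, hodd.tsum_prod]
  exact (tsum_even_add_odd (f := fun n => ∑' b, f (n, b)) heven.prod hodd.prod).symm

theorem tsum_nat_prod_nat_eq_ge_add_lt {f : ℕ × ℕ → E} (hf : Summable f) :
    ∑' p, f p = ∑' p : ℕ × ℕ, f (p.1 + p.2, p.2) + ∑' p : ℕ × ℕ, f (p.2, p.1 + p.2 + 1) := by
  have hge : Function.Injective fun p : ℕ × ℕ => (p.1 + p.2, p.2) :=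
    fun p q hpq => by grind
  have hlt : Function.Injective fun p : ℕ × ℕ => (p.2, p.1 + p.2 + 1) :=
    fun p q hpq => by grind
  have hcompl : IsCompl (Set.range fun p : ℕ × ℕ => (p.1 + p.2, p.2))
      (Set.range fun p : ℕ × ℕ => (p.2, p.1 + p.2 + 1)) := by
    refine ⟨Set.disjoint_left.2 ?_, codisjoint_iff_le_sup.2 ?_⟩
    · rintro _ ⟨⟨a, b⟩, rfl⟩ ⟨⟨c, d⟩, h⟩
      grind
    · rintro ⟨a, b⟩ -
      obtain hba | hab := le_or_gt b a
      · exact .inl ⟨(a - b, b), by grind⟩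
      · exact .inr ⟨(b - a - 1, a), by grind⟩
  exact ((hge.hasSum_range_iff.2 (hf.comp_injective hge).hasSum).add_isCompl hcompl
    (hlt.hasSum_range_iff.2 (hf.comp_injective hlt).hasSum)).tsum_eq

theorem tsum_nat_prod_nat_eq_tsum_sum_antidiagonal {f : ℕ × ℕ → E} (hf : Summable f) :
    ∑' p, f p = ∑' n, ∑ p ∈ antidiagonal n, f p := by
  let e := HasAntidiagonal.sigmaAntidiagonalEquivProd (A := ℕ)
  calc
    ∑' p, f p = ∑' q, f (e q) := (e.tsum_eq f).symm
    _ = ∑' n, ∑' p : antidiagonal n, f p.1 := (e.summable_iff.2 hf).tsum_sigma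
    _ = ∑' n, ∑ p ∈ antidiagonal n, f p := tsum_congr fun n => (antidiagonal n).tsum_subtype f

theorem tsum_pnat_pnat_eq_tsum_nat_prod_nat {f : ℕ → ℕ → E}
    (hf : Summable fun p : ℕ × ℕ => f (p.1 + 1) (p.2 + 1)) :
    ∑' (m : ℕ+) (n : ℕ+), f m n = ∑' p : ℕ × ℕ, f (p.1 + 1) (p.2 + 1) := by
  rw [hf.tsum_prod, tsum_pnat_eq_tsum_succ (f := fun m : ℕ => ∑' n : ℕ+, f m n)]
  exact tsum_congr fun m => tsum_pnat_eq_tsum_succ (f := f (m + 1))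

end DoubleSeries

theorem hasSum_sub_add_of_antitone {u : ℕ → ℝ} (hu : Antitone u) (hu₀ : Tendsto u atTop (𝓝 0))
    (k : ℕ) : HasSum (fun m => u m - u (m + k)) (∑ j ∈ range k, u j) := by
  rw [hasSum_iff_tendsto_nat_of_nonneg fun m => sub_nonneg.2 (hu (Nat.le_add_right m k))]
  have hpartial (M : ℕ) : ∑ m ∈ range M, (u m - u (m + k)) =
      ∑ j ∈ range k, u j - ∑ j ∈ range k, u (M + j) := by
    have hMk := sum_range_add u M k
    have hkM := sum_range_add u k M
    simp only [sum_sub_distrib, add_comm _ k] at hMk hkM ⊢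
    linarith
  have htail : Tendsto (fun M => ∑ j ∈ range k, u (M + j)) atTop (𝓝 0) := by
    simpa using tendsto_finsetSum (range k) fun j _ => hu₀.comp (tendsto_add_atTop_nat j)
  simpa only [hpartial, sub_zero] using htail.const_sub (∑ j ∈ range k, u j)

section ArithmeticProgression

variable {d r : ℝ}

theorem antitone_one_div_mul_natCast_add (hd : 0 < d) (hr : 0 < r) :
    Antitone fun m : ℕ => 1 / (d * m + r) := by
  intro m n hmn
  dsimp only
  gcongr

theorem tendsto_one_div_mul_natCast_add (hd : 0 < d) (r : ℝ) :
    Tendsto (fun m : ℕ => 1 / (d * m + r)) atTop (𝓝 0) := by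
  simp only [one_div]
  exact (tendsto_atTop_add_const_right _ r
    (tendsto_natCast_atTop_atTop.const_mul_atTop hd)).inv_tendsto_atTop

theorem summable_one_div_mul_natCast_add_rpow {q : ℝ} (hd : 0 < d) (hr : 0 < r) (hq : 1 < q) :
    Summable fun n : ℕ => 1 / (d * n + r) ^ q := by
  refine (((Real.summable_one_div_nat_add_rpow (r / d) q).2 hq).mul_left (1 / d ^ q)).congr ?_
  intro n
  have hfactor : d * n + r = d * (n + r / d) := by field_simp
  rw [hfactor, Real.mul_rpow hd.le (by positivity), abs_of_nonneg (by positivity),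
    one_div_mul_one_div]

end ArithmeticProgression

/-- The summand `1 / (x y (x + y))` of Tornheim's double series. -/
noncomputable def tornheimTerm (x y : ℝ) : ℝ := 1 / (x * y * (x + y))

/-- Tornheim's double series over two arithmetic progressions: the sum of `1 / (x y (x + y))` over
`x = r, r + d, r + 2 d, …` and `y = s, s + e, s + 2 e, …`. -/
noncomputable def tornheimSum (d r e s : ℝ) : ℝ :=
  ∑' p : ℕ × ℕ, tornheimTerm (d * p.1 + r) (e * p.2 + s)

/-- The double zeta value of arguments `(2, 1)` along arithmetic progressions of difference `d`: the
sum of `1 / (y z ^ 2)` over `y = d j + r` and `z = d (i + j) + s`. The classical `ζ(2, 1)`, summed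
over `0 < y < z`, is `doubleZetaSum 1 1 2`. -/
noncomputable def doubleZetaSum (d r s : ℝ) : ℝ :=
  ∑' p : ℕ × ℕ, 1 / ((d * p.2 + r) * (d * (p.1 + p.2) + s) ^ 2)

section Terms

variable {x y : ℝ}

theorem tornheimTerm_comm (x y : ℝ) : tornheimTerm x y = tornheimTerm y x := by
  unfold tornheimTerm
  ring

theorem tornheimTerm_mul_mul (c x y : ℝ) :
    tornheimTerm (c * x) (c * y) = tornheimTerm x y / c ^ 3 := by
  unfold tornheimTerm
  rw [div_div]
  ring

theorem tornheimTerm_self (x : ℝ) : tornheimTerm x x = 1 / 2 * (1 / x ^ 3) := by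
  unfold tornheimTerm
  rw [one_div_mul_one_div]
  ring

theorem tornheimTerm_eq_add (hx : 0 < x) (hy : 0 < y) :
    tornheimTerm x y = 1 / (x * (x + y) ^ 2) + 1 / (y * (x + y) ^ 2) := by
  unfold tornheimTerm
  field_simp
  ring

theorem tornheimTerm_eq_sub_div (hx : 0 < x) (hy : 0 < y) :
    tornheimTerm x y = (1 / x - 1 / (x + y)) / y ^ 2 := by
  unfold tornheimTerm
  field_simp
  ring

theorem one_div_sq_mul_add_eq_sub_tornheimTerm (hx : 0 < x) (hy : 0 < y) :
    1 / (x ^ 2 * (x + y)) = 1 / (y * x ^ 2) - tornheimTerm x y := by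
  unfold tornheimTerm
  field_simp
  ring

theorem tornheimTerm_nonneg (hx : 0 ≤ x) (hy : 0 ≤ y) : 0 ≤ tornheimTerm x y := by
  unfold tornheimTerm
  positivity

theorem tornheimTerm_le_rpow_mul_rpow (hx : 0 < x) (hy : 0 < y) :
    tornheimTerm x y ≤ 1 / x ^ (3 / 2 : ℝ) * (1 / y ^ (3 / 2 : ℝ)) := by
  have rpow_eq {t : ℝ} (ht : 0 < t) : t ^ (3 / 2 : ℝ) = t * √t := by
    rw [Real.sqrt_eq_rpow, ← Real.rpow_one_add' ht.le (by norm_num)]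
    norm_num
  have amgm : √x * √y ≤ x + y := by
    nlinarith [Real.sq_sqrt hx.le, Real.sq_sqrt hy.le, sq_nonneg (√x - √y)]
  rw [tornheimTerm, one_div_mul_one_div, rpow_eq hx, rpow_eq hy, mul_mul_mul_comm]
  gcongr

theorem one_div_mul_sq_le_mul_tornheimTerm {c z : ℝ} (hx : 0 < x) (hy : 0 < y) (hxz : x ≤ z)
    (hcz : x + y ≤ c * z) : 1 / (y * z ^ 2) ≤ c * tornheimTerm x y := by
  have hz : 0 < z := hx.trans_le hxz
  have hdenom : x * y * (x + y) ≤ c * (y * z ^ 2) := calc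
    x * y * (x + y) ≤ z * y * (c * z) := by gcongr
    _ = c * (y * z ^ 2) := by ring
  rwa [tornheimTerm, mul_one_div, div_le_div_iff₀ (by positivity) (by positivity), one_mul]

end Terms

section Summability

variable {d r e s : ℝ}

theorem summable_tornheimTerm (hd : 0 < d) (hr : 0 < r) (he : 0 < e) (hs : 0 < s) :
    Summable fun p : ℕ × ℕ => tornheimTerm (d * p.1 + r) (e * p.2 + s) := by
  have hq : (1 : ℝ) < 3 / 2 := by norm_num
  refine .of_nonneg_of_le (fun p => tornheimTerm_nonneg (by positivity) (by positivity))
    (fun p => tornheimTerm_le_rpow_mul_rpow (by positivity) (by positivity))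
    ((summable_one_div_mul_natCast_add_rpow hd hr hq).mul_of_nonneg
      (summable_one_div_mul_natCast_add_rpow he hs hq) (fun n => ?_) (fun n => ?_))
  all_goals
    dsimp only [Pi.zero_apply]
    positivity

theorem summable_doubleZeta (hd : 0 < d) (hr : 0 < r) (hs : 0 < s) :
    Summable fun p : ℕ × ℕ => 1 / ((d * p.2 + r) * (d * (p.1 + p.2) + s) ^ 2) := by
  refine .of_nonneg_of_le (fun p => by positivity) (fun p => ?_)
    ((summable_tornheimTerm hd hs hd hr).mul_left ((r + s) / s))
  have hj : 0 ≤ d * p.2 := by positivity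
  have hij : 0 ≤ r * (d * (p.1 + p.2)) := by positivity
  refine one_div_mul_sq_le_mul_tornheimTerm (by positivity) (by positivity) (by linarith) ?_
  rw [div_mul_eq_mul_div, le_div_iff₀ hs]
  linear_combination hij

end Summability

section Relations

variable {d r e s : ℝ}

theorem tornheimSum_comm (d r e s : ℝ) : tornheimSum d r e s = tornheimSum e s d r := by
  unfold tornheimSum
  rw [← (Equiv.prodComm ℕ ℕ).tsum_eq]
  exact tsum_congr fun p => tornheimTerm_comm _ _

theorem tornheimSum_mul (c d r e s : ℝ) :
    tornheimSum (c * d) (c * r) (c * e) (c * s) = tornheimSum d r e s / c ^ 3 := by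
  unfold tornheimSum
  simp only [mul_assoc, ← mul_add, tornheimTerm_mul_mul, tsum_div_const]

theorem tornheimSum_eq_even_add_odd_left (hd : 0 < d) (hr : 0 < r) (he : 0 < e) (hs : 0 < s) :
    tornheimSum d r e s = tornheimSum (2 * d) r e s + tornheimSum (2 * d) (d + r) e s := by
  unfold tornheimSum
  rw [tsum_nat_prod_eq_even_add_odd (summable_tornheimTerm hd hr he hs)]
  push_cast
  ring_nf

theorem tornheimSum_eq_even_add_odd_right (hd : 0 < d) (hr : 0 < r) (he : 0 < e) (hs : 0 < s) :
    tornheimSum d r e s = tornheimSum d r (2 * e) s + tornheimSum d r (2 * e) (e + s) := by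
  simp only [tornheimSum_comm d r]
  exact tornheimSum_eq_even_add_odd_left he hs hd hr

theorem doubleZetaSum_eq_add (hd : 0 < d) (hr : 0 < r) (hs : 0 < s) :
    doubleZetaSum d r s =
      ∑' j : ℕ, 1 / ((d * j + r) * (d * j + s) ^ 2) + doubleZetaSum d r (d + s) := by
  unfold doubleZetaSum
  rw [tsum_nat_prod_eq_zero_add (summable_doubleZeta hd hr hs)]
  congr! 4 <;> push_cast <;> ring

theorem tornheimSum_self_eq_two_mul_doubleZetaSum (hd : 0 < d) (hr : 0 < r) :
    tornheimSum d r d r = 2 * doubleZetaSum d r (2 * r) := by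
  let f (p : ℕ × ℕ) : ℝ := 1 / ((d * p.2 + r) * (d * (p.1 + p.2) + 2 * r) ^ 2)
  have hf : Summable f := summable_doubleZeta hd hr (by positivity)
  have hterm (p : ℕ × ℕ) : tornheimTerm (d * p.1 + r) (d * p.2 + r) = f p.swap + f p := by
    rw [tornheimTerm_eq_add (by positivity) (by positivity)]
    dsimp only [f, Prod.swap]
    ring_nf
  calc
    tornheimSum d r d r = ∑' p : ℕ × ℕ, f p.swap + ∑' p, f p := by
      rw [← hf.prod_symm.tsum_add hf]
      exact tsum_congr hterm
    _ = 2 * doubleZetaSum d r (2 * r) := by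
      rw [two_mul]
      exact congrArg (· + _) ((Equiv.prodComm ℕ ℕ).tsum_eq f)

theorem hasSum_tornheimTerm_row (hd : 0 < d) (hr : 0 < r) (j : ℕ) :
    HasSum (fun i : ℕ => tornheimTerm (d * j + d) (d * i + r))
      (∑ k ∈ range (j + 1), 1 / ((d * k + r) * (d * j + d) ^ 2)) := by
  have htelescope := (hasSum_sub_add_of_antitone (antitone_one_div_mul_natCast_add hd hr)
    (tendsto_one_div_mul_natCast_add hd r) (j + 1)).div_const ((d * j + d) ^ 2)
  simp only [sum_div, div_div] at htelescope
  refine htelescope.congr_fun fun i => ?_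
  rw [tornheimTerm_comm, tornheimTerm_eq_sub_div (by positivity) (by positivity)]
  push_cast
  ring_nf

theorem tornheimSum_eq_doubleZetaSum (hd : 0 < d) (hr : 0 < r) :
    tornheimSum d r d d = doubleZetaSum d r d := by
  rw [tornheimSum_comm, tornheimSum, doubleZetaSum, (summable_tornheimTerm hd hd hd hr).tsum_prod,
    tsum_nat_prod_nat_eq_tsum_sum_antidiagonal (summable_doubleZeta hd hr hd)]
  refine tsum_congr fun j => (hasSum_tornheimTerm_row hd hr j).tsum_eq.trans ?_
  rw [← Nat.sum_antidiagonal_eq_sum_range_succ (fun k _ => 1 / ((d * k + r) * (d * j + d) ^ 2)),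
    ← Nat.sum_antidiagonal_swap]
  refine sum_congr rfl fun p hp => ?_
  rw [← mem_antidiagonal.1 hp, Nat.cast_add]
  rfl

end Relations

theorem rzeta_eq_tsum_nat (k : ℕ) : rzeta k = ∑' n : ℕ, 1 / ((n : ℝ) + 1) ^ k := by
  unfold rzeta
  rw [tsum_pnat_eq_tsum_succ (f := fun n : ℕ => 1 / (n : ℝ) ^ k)]
  push_cast
  rfl

theorem tornheimSum_one_eq_two_mul_doubleZetaSum :
    tornheimSum 1 1 1 1 = 2 * doubleZetaSum 1 1 2 := by
  simpa only [mul_one] using tornheimSum_self_eq_two_mul_doubleZetaSum one_pos one_pos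

theorem tornheimSum_one_eq_two_mul_rzeta_three : tornheimSum 1 1 1 1 = 2 * rzeta 3 := by
  have htelescope : tornheimSum 1 1 1 1 = doubleZetaSum 1 1 1 :=
    tornheimSum_eq_doubleZetaSum one_pos one_pos
  have hsplit : doubleZetaSum 1 1 1 = rzeta 3 + doubleZetaSum 1 1 2 := by
    rw [doubleZetaSum_eq_add one_pos one_pos one_pos, rzeta_eq_tsum_nat, one_add_one_eq_two]
    congr! 4
    ring
  linarith [tornheimSum_one_eq_two_mul_doubleZetaSum]

theorem tornheimSum_two_two_eq : tornheimSum 2 2 2 2 = tornheimSum 1 1 1 1 / 8 := by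
  have hscale := tornheimSum_mul 2 1 1 1 1
  norm_num at hscale
  exact hscale

theorem tornheimSum_two_one_two_two_eq : tornheimSum 2 1 2 2 = 7 / 16 * rzeta 3 := by
  have hparity : tornheimSum 1 1 1 1 = tornheimSum 2 1 2 1 + tornheimSum 2 1 2 2 +
      (tornheimSum 2 2 2 1 + tornheimSum 2 2 2 2) := by
    rw [tornheimSum_eq_even_add_odd_left, tornheimSum_eq_even_add_odd_right,
      tornheimSum_eq_even_add_odd_right (d := 2 * 1) (r := 1 + 1)]
    all_goals norm_num
  have hodd : tornheimSum 2 1 2 1 = 2 * tornheimSum 2 1 2 2 := by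
    rw [tornheimSum_self_eq_two_mul_doubleZetaSum two_pos one_pos, mul_one,
      tornheimSum_eq_doubleZetaSum two_pos one_pos]
  linarith [tornheimSum_comm 2 2 2 1, tornheimSum_two_two_eq,
    tornheimSum_one_eq_two_mul_rzeta_three]

theorem zetaSO_eq_tsum_nat_prod_nat {s₁ s₂ s₃ s₄ : ℕ} {f : ℕ × ℕ → ℝ} (hf : Summable f)
    (hterm : ∀ i j : ℕ, 1 / (((i : ℝ) + 1) ^ s₁ * (j + 1) ^ s₂ * (i + j + 2) ^ s₃ *
      (i + 2 * j + 3) ^ s₄) = f (i, j)) :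
    zetaSO s₁ s₂ s₃ s₄ = ∑' p, f p := by
  let g (m n : ℕ) : ℝ :=
    1 / ((m : ℝ) ^ s₁ * (n : ℝ) ^ s₂ * ((m : ℝ) + n) ^ s₃ * ((m : ℝ) + 2 * n) ^ s₄)
  have hg : (fun p : ℕ × ℕ => g (p.1 + 1) (p.2 + 1)) = f := by
    funext p
    rw [← hterm]
    dsimp only [g]
    push_cast
    ring_nf
  exact (tsum_pnat_pnat_eq_tsum_nat_prod_nat (f := g) (hg ▸ hf)).trans (by rw [hg])

theorem zetaSO_one_one_zero_one_eq_two_mul_tornheimSum :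
    zetaSO 1 1 0 1 = 2 * tornheimSum 1 1 2 2 := by
  rw [tornheimSum, ← tsum_mul_left]
  refine zetaSO_eq_tsum_nat_prod_nat
    ((summable_tornheimTerm one_pos one_pos two_pos two_pos).mul_left 2) fun i j => ?_
  unfold tornheimTerm
  field_simp
  ring

theorem summable_tornheimTerm_above_diagonal :
    Summable fun p : ℕ × ℕ => tornheimTerm (p.1 + p.2 + 2) (p.2 + 1) := by
  have h := (summable_tornheimTerm one_pos one_pos one_pos one_pos).comp_injective
    (i := fun p : ℕ × ℕ => (p.1 + p.2 + 1, p.2)) fun p q hpq => by grind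
  refine h.congr fun p => ?_
  dsimp only [Function.comp_apply]
  push_cast
  ring_nf

theorem tornheimSum_one_eq_diagonal_add :
    tornheimSum 1 1 1 1 =
      1 / 2 * rzeta 3 + 2 * ∑' p : ℕ × ℕ, tornheimTerm (p.1 + p.2 + 2) (p.2 + 1) := by
  let f (p : ℕ × ℕ) : ℝ := tornheimTerm (p.1 + 1) (p.2 + 1)
  have hf : Summable f := by
    simpa only [one_mul] using summable_tornheimTerm one_pos one_pos one_pos one_pos
  have hge : Summable fun p : ℕ × ℕ => f (p.1 + p.2, p.2) :=
    hf.comp_injective (i := fun p : ℕ × ℕ => (p.1 + p.2, p.2)) fun p q hpq => by grind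
  have hdiag : ∑' j : ℕ, f (0 + j, j) = 1 / 2 * rzeta 3 := by
    simp only [f, zero_add, tornheimTerm_self, tsum_mul_left, rzeta_eq_tsum_nat]
  have hgt (p : ℕ × ℕ) : f (p.1 + 1 + p.2, p.2) = tornheimTerm (p.1 + p.2 + 2) (p.2 + 1) := by
    dsimp only [f]
    push_cast
    ring_nf
  have hlt (p : ℕ × ℕ) : f (p.2, p.1 + p.2 + 1) = tornheimTerm (p.1 + p.2 + 2) (p.2 + 1) := by
    rw [← hgt, add_right_comm p.1]
    exact tornheimTerm_comm _ _
  calc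
    tornheimSum 1 1 1 1 = ∑' p, f p := by simp only [tornheimSum, one_mul, f]
    _ = ∑' j : ℕ, f (0 + j, j) + ∑' p : ℕ × ℕ, f (p.1 + 1 + p.2, p.2) +
        ∑' p : ℕ × ℕ, f (p.2, p.1 + p.2 + 1) := by
      rw [tsum_nat_prod_nat_eq_ge_add_lt hf, tsum_nat_prod_eq_zero_add hge]
    _ = 1 / 2 * rzeta 3 + 2 * ∑' p : ℕ × ℕ, tornheimTerm (p.1 + p.2 + 2) (p.2 + 1) := by
      rw [hdiag, tsum_congr hgt, tsum_congr hlt, add_assoc, two_mul]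

theorem zetaSO_zero_zero_two_one_eq_sub :
    zetaSO 0 0 2 1 =
      doubleZetaSum 1 1 2 - ∑' p : ℕ × ℕ, tornheimTerm (p.1 + p.2 + 2) (p.2 + 1) := by
  have hdouble := summable_doubleZeta one_pos one_pos two_pos
  rw [doubleZetaSum, ← hdouble.tsum_sub summable_tornheimTerm_above_diagonal]
  refine zetaSO_eq_tsum_nat_prod_nat (hdouble.sub summable_tornheimTerm_above_diagonal)
    fun i j => ?_
  dsimp only
  rw [one_mul, one_mul,
    ← one_div_sq_mul_add_eq_sub_tornheimTerm (by positivity) (by positivity)]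
  ring_nf

theorem stmt15 :
    zetaSO 1 1 0 1 = (11 / 8) * rzeta 3 ∧
    zetaSO 0 0 2 1 = (1 / 4) * rzeta 3 := by
  constructor
  · have hparity : tornheimSum 1 1 2 2 = tornheimSum 2 1 2 2 + tornheimSum 2 2 2 2 := by
      rw [tornheimSum_eq_even_add_odd_left one_pos one_pos two_pos two_pos]
      norm_num
    rw [zetaSO_one_one_zero_one_eq_two_mul_tornheimSum, hparity, tornheimSum_two_one_two_two_eq,
      tornheimSum_two_two_eq, tornheimSum_one_eq_two_mul_rzeta_three]
    ring
  · linarith [zetaSO_zero_zero_two_one_eq_sub, tornheimSum_one_eq_two_mul_doubleZetaSum,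
      tornheimSum_one_eq_diagonal_add]
end

section
/- ζ_so(0,0,2,2) = (3/8)·ζ(4) − 4·ζ(3,1; −1,1), where ζ(3,1;−1,1) = ∑_{m>n≥1} (−1)^m/(m^3 n). -/
/-!
Write `A = ζ(2,2;1,1)` and `B = ζ(2,2;-1,1)`. The sum `A + B` only sees even outer indices `2a`, so
it is half the sum of `1 / (a² b²)` over `b < 2a`. Splitting this region into `b < a`, `b = a` and
`a < b < 2a`, and parametrizing the last part by `(a, b) = (m + n, m + 2n)`, gives
`2 (A + B) = A + ζ(4) + ζ_so(0,0,2,2)`. The stuffle product of `ζ(2)` with itself evaluates `A`, the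
shuffle product of `∑ (-1)^m / m² = -ζ(2) / 2` with itself expresses `B` through `ζ(3,1;-1,1)`, and
`ζ(2)² = (5/2) ζ(4)` finishes the computation.
-/

namespace EulerSum

section Reindexing

theorem pnat_two_mul (n : ℕ+) : 2 * n = n + n :=
  PNat.eq (two_mul (n : ℕ))

theorem range_add_fst :
    Set.range (fun p : ℕ+ × ℕ+ => (p.1 + p.2, p.1)) = {p | p.2 < p.1} := by
  ext ⟨a, b⟩
  constructor
  · rintro ⟨⟨n, k⟩, hnk⟩
    obtain ⟨rfl, rfl⟩ := Prod.mk.inj hnk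
    exact PNat.lt_add_right n k
  · intro hba
    exact ⟨(b, a - b), Prod.ext (PNat.add_sub_of_lt hba) rfl⟩

theorem add_fst_injective :
    Function.Injective (fun p : ℕ+ × ℕ+ => (p.1 + p.2, p.1)) := by
  rintro ⟨a, b⟩ ⟨c, d⟩ h
  obtain ⟨hadd, rfl⟩ := Prod.mk.inj h
  exact Prod.ext rfl (add_left_cancel hadd)

theorem tsum_indicator_snd_lt_fst {E : Type*} [AddCommMonoid E] [TopologicalSpace E]
    (f : ℕ+ × ℕ+ → E) :
    ∑' p, {p : ℕ+ × ℕ+ | p.2 < p.1}.indicator f p = ∑' p : ℕ+ × ℕ+, f (p.1 + p.2, p.1) := by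
  rw [← tsum_subtype, ← range_add_fst, tsum_range f add_fst_injective]

variable {E : Type*} [NormedAddCommGroup E] [CompleteSpace E] {f : ℕ+ × ℕ+ → E}

theorem tsum_eq_lower_add_upper_add_diagonal (hf : Summable f) :
    ∑' p, f p = ∑' p : ℕ+ × ℕ+, f (p.1 + p.2, p.1) + ∑' p : ℕ+ × ℕ+, f (p.1, p.1 + p.2)
      + ∑' n, f (n, n) := by
  have split_indicators (p : ℕ+ × ℕ+) : f p = {p : ℕ+ × ℕ+ | p.2 < p.1}.indicator f p
      + {p : ℕ+ × ℕ+ | p.1 < p.2}.indicator f p + (Set.diagonal ℕ+).indicator f p := by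
    rcases lt_trichotomy p.1 p.2 with h | h | h
    · simp [h, h.not_gt, h.ne]
    · simp [h]
    · simp [h, h.not_gt, h.ne']
  have upper : ∑' p, {p : ℕ+ × ℕ+ | p.1 < p.2}.indicator f p
      = ∑' p : ℕ+ × ℕ+, f (p.1, p.1 + p.2) := by
    rw [← (Equiv.prodComm ℕ+ ℕ+).tsum_eq]
    exact tsum_indicator_snd_lt_fst (f ∘ Prod.swap)
  have diagonal : ∑' p, (Set.diagonal ℕ+).indicator f p = ∑' n, f (n, n) := by
    rw [← tsum_subtype, ← Set.range_diag]
    exact tsum_range f fun a b h => congrArg Prod.fst h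
  rw [tsum_congr split_indicators,
    ((hf.indicator _).add (hf.indicator _)).tsum_add (hf.indicator _),
    (hf.indicator _).tsum_add (hf.indicator _), tsum_indicator_snd_lt_fst, upper, diagonal]

theorem tsum_indicator_snd_lt_two_mul_fst (hf : Summable f) :
    ∑' p, {p : ℕ+ × ℕ+ | p.2 < 2 * p.1}.indicator f p
      = ∑' p : ℕ+ × ℕ+, f (p.1 + p.2, p.1) + ∑' p : ℕ+ × ℕ+, f (p.1 + p.2, p.1 + 2 * p.2)
        + ∑' n, f (n, n) := by
  have lower (p : ℕ+ × ℕ+) : p.1 < 2 * (p.1 + p.2) := by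
    rw [pnat_two_mul, add_assoc]
    exact PNat.lt_add_right _ _
  have diagonal (n : ℕ+) : n < 2 * n := by
    rw [pnat_two_mul]
    exact PNat.lt_add_right _ _
  have upper : ∑' p : ℕ+ × ℕ+, {p : ℕ+ × ℕ+ | p.2 < 2 * p.1}.indicator f (p.1, p.1 + p.2)
      = ∑' p : ℕ+ × ℕ+, f (p.1 + p.2, p.1 + 2 * p.2) := calc
    _ = ∑' p, {p : ℕ+ × ℕ+ | p.2 < p.1}.indicator (fun p => f (p.1, p.1 + p.2)) p := by
      simp only [Set.indicator_apply, Set.mem_ofPred_eq, pnat_two_mul, add_lt_add_iff_left]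
    _ = ∑' p : ℕ+ × ℕ+, f (p.1 + p.2, p.1 + p.2 + p.1) := tsum_indicator_snd_lt_fst _
    _ = _ := by
      rw [← (Equiv.prodComm ℕ+ ℕ+).tsum_eq]
      refine tsum_congr fun p => ?_
      rw [Equiv.prodComm_apply, Prod.fst_swap, Prod.snd_swap, add_comm p.2, add_assoc, pnat_two_mul]
  rw [tsum_eq_lower_add_upper_add_diagonal (hf.indicator _), upper]
  simp only [Set.indicator_apply, Set.mem_ofPred_eq, lower, diagonal, if_true]

end Reindexing

theorem summable_pow_mul {ι : Type*} {g : ι → ℝ} {x : ℝ} (hg : Summable g) (hx : |x| ≤ 1)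
    (k : ι → ℕ) : Summable fun i => x ^ k i * g i := by
  refine hg.norm.of_norm_bounded fun i => ?_
  rw [norm_mul, norm_pow]
  exact mul_le_of_le_one_left (norm_nonneg _) (pow_le_one₀ (norm_nonneg x) hx)

theorem tsum_add_tsum_neg_one_pow_mul {g : ℕ+ → ℝ} (hg : Summable g) :
    ∑' m, g m + ∑' m : ℕ+, (-1) ^ (m : ℕ) * g m = 2 * ∑' m, g (2 * m) := by
  have two_mul_injective : Function.Injective (fun m : ℕ+ => 2 * m) := mul_right_injective 2
  rw [← hg.tsum_add (summable_pow_mul hg (by norm_num) _), ← two_mul_injective.tsum_eq,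
    ← tsum_mul_left]
  · refine tsum_congr fun m => ?_
    rw [PNat.mul_coe, PNat.val_ofNat, (even_two_mul (m : ℕ)).neg_one_pow, one_mul, two_mul]
  · intro m hm
    rcases Nat.even_or_odd' (m : ℕ) with ⟨k, hk | hk⟩
    · exact ⟨⟨k, by have := m.pos; omega⟩, PNat.eq hk.symm⟩
    · simp [hk, pow_succ] at hm

theorem tsum_prod_add_tsum_prod_neg_one_pow_mul {ι : Type*} {g : ℕ+ × ι → ℝ} (hg : Summable g) :
    ∑' p, g p + ∑' p : ℕ+ × ι, (-1) ^ (p.1 : ℕ) * g p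
      = 2 * ∑' p : ℕ+ × ι, g (2 * p.1, p.2) := by
  have double_fst_injective : Function.Injective (fun p : ℕ+ × ι => (2 * p.1, p.2)) :=
    (mul_right_injective (2 : ℕ+)).prodMap Function.injective_id
  rw [hg.tsum_prod, (summable_pow_mul hg (by norm_num) _).tsum_prod,
    (hg.comp_injective double_fst_injective).tsum_prod (f := fun p => g (2 * p.1, p.2))]
  simp only [tsum_mul_left]
  exact tsum_add_tsum_neg_one_pow_mul hg.prod

/-- The depth-one alternating Euler sum `ζ(s; x) = ∑ xᵐ / mˢ`; `rzeta s` is its value at `x = 1`. -/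
noncomputable def es1 (s : ℕ) (x : ℝ) : ℝ := ∑' m : ℕ+, x ^ (m : ℕ) / (m : ℝ) ^ s

variable {s t : ℕ} {x y : ℝ}

theorem es1_one (s : ℕ) : es1 s 1 = rzeta s := by
  simp only [es1, rzeta, one_pow]

theorem summable_one_div_pow (hs : 2 ≤ s) : Summable fun m : ℕ+ => 1 / (m : ℝ) ^ s :=
  summable_pnat_iff_summable_nat.mpr (Real.summable_one_div_nat_pow.mpr hs)

theorem summable_es1 (hs : 2 ≤ s) (hx : |x| ≤ 1) :
    Summable fun m : ℕ+ => x ^ (m : ℕ) / (m : ℝ) ^ s := by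
  simpa only [mul_one_div] using summable_pow_mul (summable_one_div_pow hs) hx (fun m => (m : ℕ))

theorem es1_neg_one (hs : 2 ≤ s) : es1 s (-1) = (2 / 2 ^ s - 1) * rzeta s := by
  have even_part : rzeta s + es1 s (-1) = 2 / 2 ^ s * rzeta s := calc
    _ = ∑' m : ℕ+, 1 / (m : ℝ) ^ s + ∑' m : ℕ+, (-1) ^ (m : ℕ) * (1 / (m : ℝ) ^ s) := by
      simp only [rzeta, es1, mul_one_div]
    _ = 2 * ∑' m : ℕ+, 1 / ((2 * m : ℕ+) : ℝ) ^ s :=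
      tsum_add_tsum_neg_one_pow_mul (summable_one_div_pow hs)
    _ = _ := by
      rw [rzeta, ← tsum_mul_left, ← tsum_mul_left]
      refine tsum_congr fun m => ?_
      push_cast
      rw [mul_pow]
      ring
  linarith

theorem sq_mul_sq_le_add_pow_mul_pow {a b : ℝ} (ha : 1 ≤ a) (hb : 0 ≤ b)
    (hs : 2 ≤ s) (hst : 4 ≤ s + t) : a ^ 2 * b ^ 2 ≤ (a + b) ^ s * a ^ t := by
  obtain ⟨r, rfl⟩ := Nat.exists_eq_add_of_le hs
  calc a ^ 2 * b ^ 2 ≤ a ^ (r + t) * b ^ 2 := by gcongr; omega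
    _ = b ^ 2 * a ^ r * a ^ t := by ring
    _ ≤ (a + b) ^ 2 * (a + b) ^ r * a ^ t := by gcongr <;> linarith
    _ = (a + b) ^ (2 + r) * a ^ t := by ring

theorem summable_one_div_pow_mul_pow (hs : 2 ≤ s) (ht : 2 ≤ t) :
    Summable fun p : ℕ+ × ℕ+ => 1 / ((p.1 : ℝ) ^ s * (p.2 : ℝ) ^ t) := by
  simp only [one_div, mul_inv]
  simpa only [one_div] using (summable_one_div_pow hs).mul_of_nonneg (summable_one_div_pow ht)
    (fun _ => by positivity) (fun _ => by positivity)

theorem summable_one_div_add_pow_mul_pow (hs : 2 ≤ s) (hst : 4 ≤ s + t) :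
    Summable fun p : ℕ+ × ℕ+ => 1 / (((p.1 : ℝ) + (p.2 : ℝ)) ^ s * (p.1 : ℝ) ^ t) := by
  refine (summable_one_div_pow_mul_pow le_rfl le_rfl).of_nonneg_of_le
    (fun _ => by positivity) fun p => one_div_le_one_div_of_le (by positivity) ?_
  exact sq_mul_sq_le_add_pow_mul_pow (mod_cast p.1.pos) (by positivity) hs hst

theorem summable_es2 (hs : 2 ≤ s) (hst : 4 ≤ s + t) (hx : |x| ≤ 1) (hy : |y| ≤ 1) :
    Summable fun p : ℕ+ × ℕ+ => x ^ ((p.1 : ℕ) + (p.2 : ℕ)) * y ^ (p.1 : ℕ)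
      / (((p.1 : ℝ) + (p.2 : ℝ)) ^ s * (p.1 : ℝ) ^ t) := by
  have hsum := summable_pow_mul (summable_one_div_add_pow_mul_pow hs hst) hy
    (fun p => (p.1 : ℕ))
  simpa only [mul_one_div, mul_div_assoc] using
    summable_pow_mul hsum hx (fun p => (p.1 : ℕ) + (p.2 : ℕ))

theorem es2_eq_tsum_prod (hs : 2 ≤ s) (hst : 4 ≤ s + t) (hx : |x| ≤ 1) (hy : |y| ≤ 1) :
    es2 s t x y = ∑' p : ℕ+ × ℕ+, x ^ ((p.1 : ℕ) + (p.2 : ℕ)) * y ^ (p.1 : ℕ)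
      / (((p.1 : ℝ) + (p.2 : ℝ)) ^ s * (p.1 : ℝ) ^ t) :=
  (summable_es2 hs hst hx hy).tsum_prod.symm

theorem es1_mul_es1_stuffle (hs : 2 ≤ s) (ht : 2 ≤ t) (hx : |x| ≤ 1) (hy : |y| ≤ 1) :
    es1 s x * es1 t y = es2 s t x y + es2 t s y x + es1 (s + t) (x * y) := by
  let f (p : ℕ+ × ℕ+) : ℝ :=
    x ^ (p.1 : ℕ) / (p.1 : ℝ) ^ s * (y ^ (p.2 : ℕ) / (p.2 : ℝ) ^ t)
  have hsx := (summable_es1 hs hx).norm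
  have hty := (summable_es1 ht hy).norm
  have lower : ∑' p : ℕ+ × ℕ+, f (p.1 + p.2, p.1) = es2 s t x y := by
    rw [es2_eq_tsum_prod hs (by omega) hx hy]
    refine tsum_congr fun p => ?_
    simp only [f, PNat.add_coe, Nat.cast_add]
    rw [div_mul_div_comm]
  have upper : ∑' p : ℕ+ × ℕ+, f (p.1, p.1 + p.2) = es2 t s y x := by
    rw [es2_eq_tsum_prod ht (by omega) hy hx]
    refine tsum_congr fun p => ?_
    simp only [f, PNat.add_coe, Nat.cast_add]
    rw [mul_comm, div_mul_div_comm]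
  have diagonal : ∑' n, f (n, n) = es1 (s + t) (x * y) := by
    refine tsum_congr fun n => ?_
    simp only [f]
    rw [div_mul_div_comm, mul_pow, pow_add]
  calc es1 s x * es1 t y = ∑' p, f p := tsum_mul_tsum_of_summable_norm hsx hty
    _ = _ := tsum_eq_lower_add_upper_add_diagonal (summable_mul_of_summable_norm hsx hty)
    _ = _ := by rw [lower, upper, diagonal]

theorem one_div_sq_mul_sq_partial_fractions {a b : ℝ} (ha : a ≠ 0) (hb : b ≠ 0)
    (hab : a + b ≠ 0) :
    1 / (a ^ 2 * b ^ 2) = 1 / ((a + b) ^ 2 * a ^ 2) + 1 / ((a + b) ^ 2 * b ^ 2)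
      + 2 * (1 / ((a + b) ^ 3 * a) + 1 / ((a + b) ^ 3 * b)) := by
  field_simp
  ring

theorem es1_two_sq_shuffle (hx : |x| ≤ 1) :
    es1 2 x ^ 2 = 2 * es2 2 2 x 1 + 4 * es2 3 1 x 1 := by
  let u (s t : ℕ) (p : ℕ+ × ℕ+) : ℝ := x ^ ((p.1 : ℕ) + (p.2 : ℕ)) * 1 ^ (p.1 : ℕ)
    / (((p.1 : ℝ) + (p.2 : ℝ)) ^ s * (p.1 : ℝ) ^ t)
  have hu22 : Summable (u 2 2) := summable_es2 le_rfl le_rfl hx (by norm_num)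
  have hu31 : Summable (u 3 1) := summable_es2 (by norm_num) le_rfl hx (by norm_num)
  have tsum_swap (s t : ℕ) : ∑' p : ℕ+ × ℕ+, u s t p.swap = ∑' p, u s t p :=
    (Equiv.prodComm ℕ+ ℕ+).tsum_eq (u s t)
  have partial_fractions (p : ℕ+ × ℕ+) :
      x ^ (p.1 : ℕ) / (p.1 : ℝ) ^ 2 * (x ^ (p.2 : ℕ) / (p.2 : ℝ) ^ 2)
        = u 2 2 p + u 2 2 p.swap + 2 * (u 3 1 p + u 3 1 p.swap) := by
    have key := one_div_sq_mul_sq_partial_fractions (a := p.1) (b := p.2)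
      (by positivity) (by positivity) (by positivity)
    simp only [u, Prod.fst_swap, Prod.snd_swap, add_comm (p.2 : ℝ), pow_add]
    linear_combination (x ^ (p.1 : ℕ) * x ^ (p.2 : ℕ)) * key
  have hnorm := (summable_es1 le_rfl hx).norm
  rw [sq, es1, tsum_mul_tsum_of_summable_norm hnorm hnorm, tsum_congr partial_fractions,
    (hu22.add hu22.prod_symm).tsum_add ((hu31.add hu31.prod_symm).mul_left 2),
    hu22.tsum_add hu22.prod_symm, tsum_mul_left, hu31.tsum_add hu31.prod_symm,
    tsum_swap, tsum_swap, es2_eq_tsum_prod le_rfl le_rfl hx (by norm_num),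
    es2_eq_tsum_prod (by norm_num) le_rfl hx (by norm_num)]
  ring

theorem zetaSO_zero_zero_eq_tsum_prod (hs : 2 ≤ s) (ht : 2 ≤ t) :
    zetaSO 0 0 s t = ∑' p : ℕ+ × ℕ+,
      1 / (((p.1 + p.2 : ℕ+) : ℝ) ^ s * ((p.1 + 2 * p.2 : ℕ+) : ℝ) ^ t) := by
  have hinj : Function.Injective (fun p : ℕ+ × ℕ+ => (p.1 + p.2, p.1 + 2 * p.2)) := by
    rintro ⟨a, b⟩ ⟨c, d⟩ h
    simp only [Prod.mk.injEq, ← PNat.coe_inj, PNat.add_coe, PNat.mul_coe, PNat.val_ofNat] at h ⊢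
    omega
  refine Eq.trans ?_ ((summable_one_div_pow_mul_pow hs ht).comp_injective hinj).tsum_prod.symm
  simp [zetaSO]

theorem es2_one_eq_tsum_indicator (hs : 2 ≤ s) (hst : 4 ≤ s + t) (hx : |x| ≤ 1) :
    es2 s t x 1 = ∑' p : ℕ+ × ℕ+, x ^ (p.1 : ℕ) *
      {p : ℕ+ × ℕ+ | p.2 < p.1}.indicator (fun p => 1 / ((p.1 : ℝ) ^ s * (p.2 : ℝ) ^ t)) p := by
  simp only [← Set.indicator_mul_right _ (fun p : ℕ+ × ℕ+ => x ^ (p.1 : ℕ))]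
  rw [tsum_indicator_snd_lt_fst, es2_eq_tsum_prod hs hst hx (by norm_num)]
  refine tsum_congr fun p => ?_
  push_cast
  rw [one_pow, mul_one, mul_one_div]

theorem es2_one_add_es2_neg_one (hs : 2 ≤ s) (ht : 2 ≤ t) :
    es2 s t 1 1 + es2 s t (-1) 1
      = 2 / 2 ^ s * (es2 s t 1 1 + zetaSO 0 0 s t + rzeta (s + t)) := by
  let f (p : ℕ+ × ℕ+) : ℝ := 1 / ((p.1 : ℝ) ^ s * (p.2 : ℝ) ^ t)
  have hf : Summable f := summable_one_div_pow_mul_pow hs ht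
  have double_fst (p : ℕ+ × ℕ+) : {p : ℕ+ × ℕ+ | p.2 < p.1}.indicator f (2 * p.1, p.2)
      = 1 / 2 ^ s * {p : ℕ+ × ℕ+ | p.2 < 2 * p.1}.indicator f p := by
    have f_double_fst : f (2 * p.1, p.2) = 1 / 2 ^ s * f p := by
      simp only [f, PNat.mul_coe, PNat.val_ofNat, Nat.cast_mul, Nat.cast_ofNat, mul_pow]
      ring
    simp only [Set.indicator_apply, Set.mem_ofPred_eq, f_double_fst, mul_ite, mul_zero]
  have es2_eq_indicator : es2 s t 1 1 = ∑' p, {p : ℕ+ × ℕ+ | p.2 < p.1}.indicator f p := by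
    simp only [es2_one_eq_tsum_indicator hs (by omega : 4 ≤ s + t) abs_one.le, one_pow, one_mul, f]
  have diagonal : ∑' n, f (n, n) = rzeta (s + t) := by
    simp only [f, rzeta, pow_add]
  calc es2 s t 1 1 + es2 s t (-1) 1
      = 2 * ∑' p : ℕ+ × ℕ+, {p : ℕ+ × ℕ+ | p.2 < p.1}.indicator f (2 * p.1, p.2) := by
        rw [es2_eq_indicator, es2_one_eq_tsum_indicator hs (by omega) (by norm_num),
          tsum_prod_add_tsum_prod_neg_one_pow_mul (hf.indicator _)]
    _ = 2 / 2 ^ s * ∑' p, {p : ℕ+ × ℕ+ | p.2 < 2 * p.1}.indicator f p := by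
        simp only [double_fst, tsum_mul_left]
        ring
    _ = _ := by
        rw [tsum_indicator_snd_lt_two_mul_fst hf, ← tsum_indicator_snd_lt_fst,
          ← es2_eq_indicator, ← zetaSO_zero_zero_eq_tsum_prod hs ht, diagonal]

theorem rzeta_eq_tsum_nat (hs : s ≠ 0) : rzeta s = ∑' n : ℕ, 1 / (n : ℝ) ^ s :=
  tsum_pnat_eq_tsum_of_eq_zero (f := fun n : ℕ => 1 / (n : ℝ) ^ s) (by simp [hs])

theorem rzeta_two_sq : rzeta 2 ^ 2 = 5 / 2 * rzeta 4 := by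
  rw [rzeta_eq_tsum_nat two_ne_zero, rzeta_eq_tsum_nat four_ne_zero, hasSum_zeta_two.tsum_eq,
    hasSum_zeta_four.tsum_eq]
  ring

end EulerSum

theorem stmt16 : zetaSO 0 0 2 2 = (3 / 8) * rzeta 4 - 4 * es2 3 1 (-1) 1 := by
  have region := EulerSum.es2_one_add_es2_neg_one (s := 2) (t := 2) le_rfl le_rfl
  have stuffle : rzeta 2 ^ 2 = 2 * es2 2 2 1 1 + rzeta 4 := by
    have h := EulerSum.es1_mul_es1_stuffle (s := 2) (t := 2) (x := 1) (y := 1)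
      le_rfl le_rfl (by norm_num) (by norm_num)
    rw [mul_one, EulerSum.es1_one, EulerSum.es1_one] at h
    linarith
  have shuffle : rzeta 2 ^ 2 / 4 = 2 * es2 2 2 (-1) 1 + 4 * es2 3 1 (-1) 1 := by
    rw [← EulerSum.es1_two_sq_shuffle (by norm_num), EulerSum.es1_neg_one le_rfl]
    ring
  linarith [EulerSum.rzeta_two_sq]
end
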